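/- arXiv:2208.05467 — 2 statements merged into one kernel-verified Lean document; each statement's English description precedes it below -/
import Mathlib

section
/- Let P ⊂ ℝⁿ be a pointed polyhedron equipped with an irredundant description. Then every circuit in C(P) is an edge direction of P if and only if for every m ∈ ℕ, every pointed polyhedron Q ⊆ ℝᵐ equipped with an irredundant description, and every linear map π : ℝᵐ → ℝⁿ with π(Q) = P, one has C(P) ⊆ π(C(Q)). -/
open Matrix

noncomputable section

/-- The polyhedron `{x : Ax = b, Bx ≤ d}`. -/
def polySet {p q n : Type*} [Fintype n] (A : Matrix p n ℝ) (b : p → ℝ)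
    (B : Matrix q n ℝ) (d : q → ℝ) : Set (n → ℝ) :=
  {x | A.mulVec x = b ∧ B.mulVec x ≤ d}

/-- The circuits of the linear description `Ax = b, Bx ≤ d`: nonzero kernel elements `g` of `A`
whose support of `Bg` is inclusion-minimal among nonzero kernel elements. -/
def circuits {p q n : Type*} [Fintype n] (A : Matrix p n ℝ) (B : Matrix q n ℝ) :
    Set (n → ℝ) :=
  {g | A.mulVec g = 0 ∧ g ≠ 0 ∧
    ∀ y : n → ℝ, A.mulVec y = 0 → y ≠ 0 →
      {i | B.mulVec y i ≠ 0} ⊆ {i | B.mulVec g i ≠ 0} →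
      {i | B.mulVec g i ≠ 0} ⊆ {i | B.mulVec y i ≠ 0}}

/-- A face of a polyhedron `P`: either `P` itself or the set of maximizers of a linear
functional over `P` whose supremum is finite and attained. -/
def IsFace {n : Type*} [Fintype n] (P F : Set (n → ℝ)) : Prop :=
  F = P ∨ ∃ (c : n → ℝ) (s : ℝ),
    (∀ y ∈ P, c ⬝ᵥ y ≤ s) ∧ (∃ y ∈ P, c ⬝ᵥ y = s) ∧ F = {x ∈ P | c ⬝ᵥ x = s}

/-- The dimension of the affine span of a set. -/
def spanDim {n : Type*} [Fintype n] (S : Set (n → ℝ)) : ℕ :=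
  Module.finrank ℝ (affineSpan ℝ S).direction

def IsVertex {n : Type*} [Fintype n] (P : Set (n → ℝ)) (v : n → ℝ) : Prop :=
  IsFace P {v}

def IsEdge {n : Type*} [Fintype n] (P F : Set (n → ℝ)) : Prop :=
  IsFace P F ∧ spanDim F = 1

/-- A nonzero vector lying in the direction space of the affine span of some edge of `P`. -/
def IsEdgeDirection {n : Type*} [Fintype n] (P : Set (n → ℝ)) (g : n → ℝ) : Prop :=
  g ≠ 0 ∧ ∃ F, IsEdge P F ∧ g ∈ (affineSpan ℝ F).direction

/-- A facet: a face whose affine span has dimension `dim P - 1`. -/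
def IsFacet {n : Type*} [Fintype n] (P F : Set (n → ℝ)) : Prop :=
  IsFace P F ∧ spanDim F + 1 = spanDim P

/-- A pointed set: contains no affine line. -/
def PointedSet {n : Type*} [Fintype n] (P : Set (n → ℝ)) : Prop :=
  ∀ x v : n → ℝ, (∀ t : ℝ, x + t • v ∈ P) → v = 0

/-- `Ax = b, Bx ≤ d` is an irredundant description of `P`. -/
def Irredundant {p q n : Type*} [Fintype n] (A : Matrix p n ℝ) (b : p → ℝ)
    (B : Matrix q n ℝ) (d : q → ℝ) (P : Set (n → ℝ)) : Prop :=
  P = polySet A b B d ∧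
  {x | A.mulVec x = b} = (affineSpan ℝ P : Set (n → ℝ)) ∧
  ∀ i, IsFacet P {x ∈ P | B.mulVec x i = d i}

/-- A basic solution of the system `Ax = b, Bx ≤ d`: satisfies the equalities, and the rows of
`A` together with the tight rows of `B` span the whole space. -/
def IsBasicSolution {p q n : Type*} [Fintype n] (A : Matrix p n ℝ) (b : p → ℝ)
    (B : Matrix q n ℝ) (d : q → ℝ) (g : n → ℝ) : Prop :=
  A.mulVec g = b ∧
  Submodule.span ℝ (Set.range (fun i => A i) ∪
    (fun i => B i) '' {i | B.mulVec g i = d i}) = ⊤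

/-! ### Elementary vectors and conformal decomposition -/

/-- Elementary vectors of `W` with respect to `L`. -/
def IsElem {E κ : Type*} [AddCommGroup E] [Module ℝ E] (W : Submodule ℝ E)
    (L : E →ₗ[ℝ] (κ → ℝ)) (g : E) : Prop :=
  g ∈ W ∧ g ≠ 0 ∧ ∀ y ∈ W, y ≠ 0 → (∀ i, L y i ≠ 0 → L g i ≠ 0) → ∀ i, L g i ≠ 0 → L y i ≠ 0

lemma ratio_lemma {κ : Type*} [Fintype κ] (a b : κ → ℝ) (hs : ∀ i, a i = 0 → b i = 0)
    (hp : ∃ i, 0 < a i * b i) :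
    ∃ t > 0, (∀ i, 0 ≤ a i * (a i - t * b i)) ∧ ∃ i, a i ≠ 0 ∧ a i - t * b i = 0 := by
  classical
  obtain ⟨j, hj⟩ := hp
  obtain ⟨i0, hi0, hmin⟩ := Finset.exists_min_image
    (Finset.univ.filter fun i => 0 < a i * b i) (fun i => a i / b i) ⟨j, by simpa using hj⟩
  simp only [Finset.mem_filter, Finset.mem_univ, true_and] at hi0 hmin
  have hb0 : b i0 ≠ 0 := by rintro h; simp [h] at hi0
  have ha0 : a i0 ≠ 0 := by rintro h; simp [h] at hi0
  have ht : 0 < a i0 / b i0 := by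
    have : a i0 / b i0 = a i0 * b i0 / (b i0 * b i0) := by field_simp
    rw [this]
    exact div_pos hi0 (mul_self_pos.2 hb0)
  refine ⟨a i0 / b i0, ht, fun i => ?_, i0, ha0, by field_simp; simp⟩
  by_cases h : 0 < a i * b i
  · have h1 := hmin i h
    have hbi : b i ≠ 0 := by rintro h'; simp [h'] at h
    have : a i * (a i - a i0 / b i0 * b i) = (a i * b i) * (a i / b i - a i0 / b i0) := by
      field_simp
    rw [this]
    exact mul_nonneg h.le (by linarith)
  · push Not at h
    have : a i * (a i - a i0 / b i0 * b i) = a i * a i + (a i0 / b i0) * (-(a i * b i)) := by ring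
    rw [this]
    exact add_nonneg (mul_self_nonneg _) (mul_nonneg ht.le (by linarith))

section elem
variable {E κ : Type*} [AddCommGroup E] [Module ℝ E] {W : Submodule ℝ E}
    {L : E →ₗ[ℝ] (κ → ℝ)}

lemma IsElem.smul {g : E} (h : IsElem W L g) {c : ℝ} (hc : c ≠ 0) : IsElem W L (c • g) := by
  obtain ⟨h1, h2, h3⟩ := h
  refine ⟨W.smul_mem _ h1, smul_ne_zero hc h2, fun y hy hy0 hs i hi => ?_⟩
  refine h3 y hy hy0 (fun k hk => ?_) i ?_
  · have := hs k hk
    intro h0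
    simp [h0] at this
  · intro h0
    simp [h0] at hi

lemma IsElem.unique (hinj : ∀ v ∈ W, L v = 0 → v = 0) {x y : E} (hx : IsElem W L x)
    (hy : y ∈ W) (hy0 : y ≠ 0) (hs : ∀ i, L y i ≠ 0 → L x i ≠ 0) : ∃ c : ℝ, x = c • y := by
  have : ∃ i, L y i ≠ 0 := by
    by_contra! h
    exact hy0 (hinj y hy (funext h))
  obtain ⟨i, hi⟩ := this
  refine ⟨L x i / L y i, ?_⟩
  by_contra hne
  have hz : x - (L x i / L y i) • y ≠ 0 := sub_ne_zero.2 hne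
  have h := hx.2.2 _ (W.sub_mem hx.1 (W.smul_mem _ hy)) hz (fun k hk h0 => by
    have : L y k = 0 := by
      by_contra h1
      exact hs k h1 h0
    simp [h0, this] at hk) i (hs i hi)
  apply h
  simp
  field_simp
  simp

/-- `w` lies coordinatewise between `0` and `u`. -/
def CBtw (w u : κ → ℝ) : Prop :=
  ∀ i, (0 ≤ u i → 0 ≤ w i ∧ w i ≤ u i) ∧ (u i ≤ 0 → u i ≤ w i ∧ w i ≤ 0)

lemma CBtw.trans {w u v : κ → ℝ} (h1 : CBtw w u) (h2 : CBtw u v) : CBtw w v := by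
  intro i
  obtain ⟨a, b⟩ := h1 i
  obtain ⟨c, d⟩ := h2 i
  constructor
  · intro h
    obtain ⟨h3, h4⟩ := c h
    obtain ⟨h5, h6⟩ := a h3
    exact ⟨h5, by linarith⟩
  · intro h
    obtain ⟨h3, h4⟩ := d h
    obtain ⟨h5, h6⟩ := b h4
    exact ⟨by linarith, h6⟩

lemma sign_of_mul {a b : ℝ} (h : 0 ≤ a * b) (h0 : a = 0 → b = 0) :
    (0 ≤ a → 0 ≤ b) ∧ (a ≤ 0 → b ≤ 0) := by
  rcases lt_trichotomy a 0 with ha | ha | ha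
  · exact ⟨fun h' => by linarith, fun _ => by nlinarith⟩
  · simp [ha, h0 ha]
  · exact ⟨fun _ => by nlinarith, fun h' => by linarith⟩

variable [Fintype κ]

open Classical in
/-- Number of nonzero coordinates. -/
def scard (a : κ → ℝ) : ℕ := (Finset.univ.filter fun i => a i ≠ 0).card

lemma scard_lt {a b : κ → ℝ} (h : ∀ i, b i ≠ 0 → a i ≠ 0) {i : κ} (ha : a i ≠ 0) (hb : b i = 0) :
    scard b < scard a := by
  classical
  apply Finset.card_lt_card
  rw [Finset.ssubset_iff_of_subset]
  · exact ⟨i, by simpa using ha, by simpa using hb⟩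
  · intro k
    simpa using h k

lemma exists_conformal (hinj : ∀ v ∈ W, L v = 0 → v = 0) (N : ℕ) :
    ∀ u ∈ W, u ≠ 0 → scard (L u) = N →
    ∃ w, IsElem W L w ∧ ∀ i, (0 ≤ L u i → 0 ≤ L w i) ∧ (L u i ≤ 0 → L w i ≤ 0) := by
  induction N using Nat.strong_induction_on with
  | _ N ih =>
  intro u hu hu0 hN
  by_cases he : IsElem W L u
  · exact ⟨u, he, fun i => ⟨id, id⟩⟩
  · have : ∃ y ∈ W, y ≠ 0 ∧ (∀ i, L y i ≠ 0 → L u i ≠ 0) ∧ ∃ i, L u i ≠ 0 ∧ L y i = 0 := by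
      by_contra! hcon
      exact he ⟨hu, hu0, fun y hy hy0 hs i hi => hcon y hy hy0 hs i hi⟩
    obtain ⟨y, hy, hy0, hs, k, hk1, hk2⟩ := this
    have : ∃ y ∈ W, y ≠ 0 ∧ (∀ i, L y i ≠ 0 → L u i ≠ 0) ∧ L y k = 0 ∧
        ∃ i, 0 < L u i * L y i := by
      have : ∃ i, L y i ≠ 0 := by
        by_contra! h
        exact hy0 (hinj y hy (funext h))
      obtain ⟨i, hi⟩ := this
      rcases lt_or_gt_of_ne (mul_ne_zero (hs i hi) hi) with h | h
      · refine ⟨-y, W.neg_mem hy, neg_ne_zero.2 hy0, fun j hj => hs j ?_, by simp [hk2], i, ?_⟩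
        · simpa using hj
        · simpa using h
      · exact ⟨y, hy, hy0, hs, hk2, i, h⟩
    obtain ⟨y, hy, hy0, hs, hk2, hp⟩ := this
    have hs' : ∀ i, L u i = 0 → L y i = 0 := fun i h => by
      by_contra h'
      exact hs i h' h
    obtain ⟨t, ht, hconf, j, hj1, hj2⟩ := ratio_lemma (L u) (L y) hs' hp
    have hL : ∀ i, L (u - t • y) i = L u i - t * L y i := by intro i; simp
    have hlt : scard (L (u - t • y)) < N := by
      rw [← hN]
      refine scard_lt (fun i hi h0 => hi ?_) hj1 (by rw [hL, hj2])
      rw [hL, h0, hs' i h0]; simp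
    obtain ⟨w, hw, hc⟩ := ih _ hlt (u - t • y) (W.sub_mem hu (W.smul_mem _ hy)) (by
      intro h0
      have := hL k
      rw [h0, hk2] at this
      simp at this
      exact hk1 this.symm) rfl
    refine ⟨w, hw, fun i => ?_⟩
    have h1 := sign_of_mul (hconf i) (fun h => by rw [h, hs' i h]; simp)
    rw [← hL] at h1
    exact ⟨fun h => (hc i).1 (h1.1 h), fun h => (hc i).2 (h1.2 h)⟩

lemma conformal_decomp (hinj : ∀ v ∈ W, L v = 0 → v = 0) (N : ℕ) :
    ∀ u ∈ W, scard (L u) = N →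
    u ∈ AddSubmonoid.closure {w | IsElem W L w ∧ CBtw (L w) (L u)} := by
  induction N using Nat.strong_induction_on with
  | _ N ih =>
  intro u hu hN
  by_cases hu0 : u = 0
  · rw [hu0]; exact zero_mem _
  obtain ⟨w, hw, hc⟩ := exists_conformal hinj N u hu hu0 hN
  have hs' : ∀ i, L u i = 0 → L w i = 0 := fun i h =>
    le_antisymm ((hc i).2 h.le) ((hc i).1 h.ge)
  have hp : ∃ i, 0 < L u i * L w i := by
    have : ∃ i, L w i ≠ 0 := by
      by_contra! h
      exact hw.2.1 (hinj w hw.1 (funext h))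
    obtain ⟨i, hi⟩ := this
    refine ⟨i, ?_⟩
    rcases lt_trichotomy (L u i) 0 with h | h | h
    · exact mul_pos_of_neg_of_neg h (lt_of_le_of_ne ((hc i).2 h.le) hi)
    · exact absurd (hs' i h) hi
    · exact mul_pos h (lt_of_le_of_ne ((hc i).1 h.le) hi.symm)
  obtain ⟨t, ht, hconf, j, hj1, hj2⟩ := ratio_lemma (L u) (L w) hs' hp
  have hL : ∀ i, L (u - t • w) i = L u i - t * L w i := by intro i; simp
  have hlt : scard (L (u - t • w)) < N := by
    rw [← hN]
    refine scard_lt (fun i hi h0 => hi ?_) hj1 (by rw [hL, hj2])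
    rw [hL, h0, hs' i h0]; simp
  have h2 := ih _ hlt (u - t • w) (W.sub_mem hu (W.smul_mem _ hw.1)) rfl
  have hbt : CBtw (L (u - t • w)) (L u) ∧ CBtw (L (t • w)) (L u) := by
    have key : ∀ i, (0 ≤ L u i → 0 ≤ t * L w i ∧ 0 ≤ L u i - t * L w i) ∧
      (L u i ≤ 0 → t * L w i ≤ 0 ∧ L u i - t * L w i ≤ 0) := by
      intro i
      have h1 := sign_of_mul (hconf i) (fun h => by rw [h, hs' i h]; simp)
      refine ⟨fun h => ⟨mul_nonneg ht.le ((hc i).1 h), h1.1 h⟩, fun h => ⟨?_, h1.2 h⟩⟩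
      have := (hc i).2 h
      nlinarith
    constructor
    · intro i
      rw [hL]
      refine ⟨fun h => ?_, fun h => ?_⟩
      · have := (key i).1 h; constructor <;> linarith
      · have := (key i).2 h; constructor <;> linarith
    · intro i
      have : L (t • w) i = t * L w i := by simp
      rw [this]
      refine ⟨fun h => ?_, fun h => ?_⟩
      · have := (key i).1 h; constructor <;> linarith
      · have := (key i).2 h; constructor <;> linarith
  have h3 : u - t • w ∈ AddSubmonoid.closure {w | IsElem W L w ∧ CBtw (L w) (L u)} := by
    refine AddSubmonoid.closure_mono ?_ h2
    rintro z ⟨hz1, hz2⟩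
    exact ⟨hz1, hz2.trans hbt.1⟩
  have h4 : t • w ∈ AddSubmonoid.closure {w | IsElem W L w ∧ CBtw (L w) (L u)} :=
    AddSubmonoid.subset_closure ⟨hw.smul ht.ne', hbt.2⟩
  have := add_mem h3 h4
  simpa using this

end elem

lemma mem_circuits_iff {p q n : Type*} [Fintype n] (A : Matrix p n ℝ)
    (B : Matrix q n ℝ) (g : n → ℝ) :
    g ∈ circuits A B ↔ IsElem (LinearMap.ker A.mulVecLin) B.mulVecLin g := by
  simp [circuits, IsElem, Set.subset_def, LinearMap.mem_ker]

lemma pointed_inj {p q n : Type*} [Fintype n] {A : Matrix p n ℝ} {b : p → ℝ}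
    {B : Matrix q n ℝ} {d : q → ℝ} (hpt : PointedSet (polySet A b B d)) {x : n → ℝ}
    (hx : x ∈ polySet A b B d) :
    ∀ v ∈ LinearMap.ker A.mulVecLin, B.mulVecLin v = 0 → v = 0 := by
  intro v hv hB
  apply hpt x v
  intro t
  rw [LinearMap.mem_ker, Matrix.mulVecLin_apply] at hv
  rw [Matrix.mulVecLin_apply] at hB
  refine ⟨?_, ?_⟩
  · rw [Matrix.mulVec_add, Matrix.mulVec_smul, hv, hx.1]; simp
  · rw [Matrix.mulVec_add, Matrix.mulVec_smul, hB]; simpa using hx.2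

/-! ### The forward direction -/

lemma edge_pts {n : Type*} [Fintype n] {P : Set (n → ℝ)} {g : n → ℝ} (h : IsEdgeDirection P g) :
    ∃ F, IsFace P F ∧ (∀ x ∈ F, ∀ y ∈ F, ∃ c : ℝ, x - y = c • g) ∧ ∃ x ∈ F, ∃ y ∈ F, x ≠ y := by
  obtain ⟨hg, F, ⟨hF, hd⟩, hgF⟩ := h
  refine ⟨F, hF, ?_, ?_⟩
  · intro x hx y hy
    have h1 := (finrank_eq_one_iff_of_nonzero'
      (⟨g, hgF⟩ : (affineSpan ℝ F).direction) (by simpa using hg)).1 hd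
    have hxy : x - y ∈ (affineSpan ℝ F).direction :=
      AffineSubspace.vsub_mem_direction (mem_affineSpan ℝ hx) (mem_affineSpan ℝ hy)
    obtain ⟨c, hc⟩ := h1 ⟨_, hxy⟩
    exact ⟨c, by simpa using (congrArg Subtype.val hc).symm⟩
  · by_contra! hcon
    have hs : F.Subsingleton := fun x hx y hy => hcon x hx y hy
    rw [direction_affineSpan, (vectorSpan_of_subsingleton ℝ hs)] at hgF
    exact hg (by simpa using hgF)

lemma forward_dir {n m pQ qQ : ℕ} {P : Set (Fin n → ℝ)} {g : Fin n → ℝ}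
    (hg : IsEdgeDirection P g)
    (AQ : Matrix (Fin pQ) (Fin m) ℝ) (bQ : Fin pQ → ℝ)
    (BQ : Matrix (Fin qQ) (Fin m) ℝ) (dQ : Fin qQ → ℝ)
    (π : (Fin m → ℝ) →ₗ[ℝ] (Fin n → ℝ)) (hpt : PointedSet (polySet AQ bQ BQ dQ))
    (hπ : (fun x => π x) '' (polySet AQ bQ BQ dQ) = P) :
    g ∈ (fun x => π x) '' circuits AQ BQ := by
  obtain ⟨F, hF, hdir, x, hx, y, hy, hxy⟩ := edge_pts hg
  -- a functional
  obtain ⟨φ, s, hφP, hφF⟩ : ∃ (φ : (Fin n → ℝ) →ₗ[ℝ] ℝ) (s : ℝ), (∀ y ∈ P, φ y ≤ s) ∧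
      F = {x ∈ P | φ x = s} := by
    rcases hF with rfl | ⟨c, s, h1, _, h3⟩
    · exact ⟨0, 0, by simp, by simp⟩
    · exact ⟨dotProductBilin ℝ ℝ c, s, h1, h3⟩
  have hxF := hx
  have hyF := hy
  rw [hφF] at hx hy
  obtain ⟨hxP, hxs⟩ := hx
  obtain ⟨hyP, hys⟩ := hy
  rw [← hπ] at hxP hyP
  obtain ⟨X, hX, rfl⟩ := hxP
  obtain ⟨Y, hY, rfl⟩ := hyP
  have hinj := pointed_inj hpt hX
  have hmem : X - Y ∈ LinearMap.ker AQ.mulVecLin := by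
    simp [LinearMap.mem_ker, Matrix.mulVec_sub, hX.1, hY.1]
  have hdec := conformal_decomp hinj _ (X - Y) hmem rfl
  have hQ : ∀ w, IsElem (LinearMap.ker AQ.mulVecLin) BQ.mulVecLin w →
      CBtw (BQ.mulVecLin w) (BQ.mulVecLin (X - Y)) → Y + w ∈ polySet AQ bQ BQ dQ := by
    intro w hw hb
    have hw1 := hw.1
    rw [LinearMap.mem_ker, Matrix.mulVecLin_apply] at hw1
    refine ⟨by rw [Matrix.mulVec_add, hw1, hY.1]; simp, fun i => ?_⟩
    have h1 := hb i
    have h2 := hX.2 i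
    have h3 := hY.2 i
    simp only [Matrix.mulVecLin_apply, Matrix.mulVec_sub, Matrix.mulVec_add, Pi.sub_apply,
      Pi.add_apply] at h1 ⊢
    rcases le_total 0 ((BQ *ᵥ X) i - (BQ *ᵥ Y) i) with h | h
    · have := h1.1 h; linarith
    · have := h1.2 h; linarith
  have hle : ∀ w, IsElem (LinearMap.ker AQ.mulVecLin) BQ.mulVecLin w →
      CBtw (BQ.mulVecLin w) (BQ.mulVecLin (X - Y)) → φ (π w) ≤ 0 := by
    intro w hw hb
    have h1 := hφP (π (Y + w)) (hπ ▸ ⟨_, hQ w hw hb, rfl⟩)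
    simp only [map_add] at h1
    simp only at hys
    linarith
  obtain ⟨w, hw, hb, hw0, hwn⟩ : ∃ w, IsElem (LinearMap.ker AQ.mulVecLin) BQ.mulVecLin w ∧
      CBtw (BQ.mulVecLin w) (BQ.mulVecLin (X - Y)) ∧ φ (π w) = 0 ∧ π w ≠ 0 := by
    by_contra! hcon
    have hall : ∀ z ∈ AddSubmonoid.closure {w | IsElem (LinearMap.ker AQ.mulVecLin)
        BQ.mulVecLin w ∧ CBtw (BQ.mulVecLin w) (BQ.mulVecLin (X - Y))},
        φ (π z) ≤ 0 ∧ (φ (π z) = 0 → π z = 0) := by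
      intro z hz
      induction hz using AddSubmonoid.closure_induction with
      | mem z hz => exact ⟨hle z hz.1 hz.2, hcon z hz.1 hz.2⟩
      | zero => simp
      | add a b _ _ ha hb =>
        simp only [map_add]
        refine ⟨by linarith, fun h => ?_⟩
        rw [ha.2 (by linarith), hb.2 (by linarith)]; simp
    have h2 := (hall _ hdec).2 (by simp only [map_sub]; simp only at hxs hys; linarith)
    apply hxy
    simpa [sub_eq_zero] using h2
  have hF2 : π (Y + w) ∈ F := by
    rw [hφF]
    refine ⟨hπ ▸ ⟨_, hQ w hw hb, rfl⟩, ?_⟩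
    simp only [map_add, hw0]
    simpa using hys
  obtain ⟨c, hc⟩ := hdir _ hF2 _ hyF
  simp at hc
  have hc0 : c ≠ 0 := by
    rintro rfl
    simp at hc
    exact hwn hc
  refine ⟨c⁻¹ • w, (mem_circuits_iff _ _ _).2 (hw.smul (inv_ne_zero hc0)), ?_⟩
  simp [hc, hc0]

/-! ### Edges, recession directions, and the Minkowski-Weyl decomposition -/

lemma edge_of {p q n : Type*} [Fintype n] [Fintype q] {A : Matrix p n ℝ} {b : p → ℝ}
    {B : Matrix q n ℝ} {d : q → ℝ} {x g : n → ℝ} {δ : ℝ} (hδ : δ ≠ 0) (hg : g ≠ 0)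
    (hx : x ∈ polySet A b B d) (hxg : x + δ • g ∈ polySet A b B d) (I : Set q)
    (hI : ∀ i ∈ I, (B *ᵥ x) i = d i ∧ (B *ᵥ g) i = 0)
    (h : ∀ y, A *ᵥ y = 0 → (∀ i ∈ I, (B *ᵥ y) i = 0) → ∃ c : ℝ, y = c • g) :
    IsEdgeDirection (polySet A b B d) g := by
  classical
  set P := polySet A b B d with hP
  set c : n → ℝ := fun k => ∑ i ∈ Finset.univ.filter (· ∈ I), B i k with hc
  set s : ℝ := ∑ i ∈ Finset.univ.filter (· ∈ I), d i with hs
  have hcy : ∀ y, c ⬝ᵥ y = ∑ i ∈ Finset.univ.filter (· ∈ I), (B *ᵥ y) i := by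
    intro y
    simp only [hc, dotProduct, Matrix.mulVec, Finset.sum_mul]
    rw [Finset.sum_comm]
  have hle : ∀ y ∈ P, c ⬝ᵥ y ≤ s := by
    intro y hy
    rw [hcy]
    exact Finset.sum_le_sum fun i _ => hy.2 i
  have htight : ∀ y ∈ P, c ⬝ᵥ y = s → ∀ i ∈ I, (B *ᵥ y) i = d i := by
    intro y hy h1 i hi
    rw [hcy, hs] at h1
    exact (Finset.sum_eq_sum_iff_of_le (fun i _ => hy.2 i)).1 h1 i (by simpa using hi)
  have hxs : c ⬝ᵥ x = s := by
    rw [hcy, hs]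
    refine Finset.sum_congr rfl fun i hi => (hI i (by simpa using hi)).1
  have hgs : c ⬝ᵥ g = 0 := by
    rw [hcy]
    refine Finset.sum_eq_zero fun i hi => (hI i (by simpa using hi)).2
  set F := {y ∈ P | c ⬝ᵥ y = s} with hF
  have hxF : x ∈ F := ⟨hx, hxs⟩
  have hxgF : x + δ • g ∈ F := ⟨hxg, by simp [dotProduct_add, hxs, hgs]⟩
  have hdir : (affineSpan ℝ F).direction = Submodule.span ℝ {g} := by
    apply le_antisymm
    · rw [direction_affineSpan, vectorSpan_def, Submodule.span_le]
      rintro _ ⟨y, hy, z, hz, rfl⟩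
      obtain ⟨c', hc'⟩ := h (y - z) (by rw [Matrix.mulVec_sub, hy.1.1, hz.1.1, sub_self])
        (fun i hi => by
          rw [Matrix.mulVec_sub, Pi.sub_apply, htight y hy.1 hy.2 i hi, htight z hz.1 hz.2 i hi,
            sub_self])
      simp only [vsub_eq_sub, SetLike.mem_coe]
      rw [hc']
      exact Submodule.smul_mem _ _ (Submodule.mem_span_singleton_self g)
    · rw [Submodule.span_singleton_le_iff_mem]
      have : (x + δ • g) -ᵥ x ∈ (affineSpan ℝ F).direction :=
        AffineSubspace.vsub_mem_direction (mem_affineSpan ℝ hxgF) (mem_affineSpan ℝ hxF)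
      simp only [vsub_eq_sub, add_sub_cancel_left] at this
      have h2 := Submodule.smul_mem _ δ⁻¹ this
      simpa [smul_smul, hδ] using h2
  refine ⟨hg, F, ⟨Or.inr ⟨c, s, hle, ⟨x, hx, hxs⟩, rfl⟩, ?_⟩, ?_⟩
  · rw [spanDim, hdir, finrank_span_singleton hg]
  · rw [hdir]; exact Submodule.mem_span_singleton_self g

/-- If a segment in direction `g` has midpoint `x`, then either it spans an edge or one can move
from `x` in both directions `± u` for some `u` not parallel to `g`. -/
lemma exists_transversal {p q n : Type*} [Fintype n] [Fintype q] {A : Matrix p n ℝ} {b : p → ℝ}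
    {B : Matrix q n ℝ} {d : q → ℝ} {x g : n → ℝ} {δ : ℝ} (hδ : 0 < δ) (hg : g ≠ 0)
    (hx1 : x + δ • g ∈ polySet A b B d) (hx2 : x - δ • g ∈ polySet A b B d)
    (hne : ¬ IsEdgeDirection (polySet A b B d) g) :
    ∃ u : n → ℝ, (∀ c : ℝ, u ≠ c • g) ∧
      ∀ᶠ ε : ℝ in nhdsWithin 0 (Set.Ioi 0),
        x + ε • u ∈ polySet A b B d ∧ x - ε • u ∈ polySet A b B d := by
  have hx : x ∈ polySet A b B d := by
    refine ⟨?_, fun i => ?_⟩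
    · have h1 := hx1.1
      have h2 := hx2.1
      rw [Matrix.mulVec_add] at h1
      rw [Matrix.mulVec_sub] at h2
      ext i
      have h1 := congrFun h1 i
      have h2 := congrFun h2 i
      simp only [Pi.add_apply, Pi.sub_apply] at h1 h2
      linarith
    · have h1 := hx1.2 i
      have h2 := hx2.2 i
      rw [Matrix.mulVec_add] at h1
      rw [Matrix.mulVec_sub] at h2
      simp only [Pi.add_apply, Pi.sub_apply] at h1 h2
      linarith
  by_contra hcon
  apply hne
  refine edge_of hδ.ne' hg hx hx1 {i | (B *ᵥ x) i = d i} (fun i hi => ⟨hi, ?_⟩) ?_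
  · have h1 := hx1.2 i
    have h2 := hx2.2 i
    rw [Set.mem_ofPred_eq] at hi
    rw [Matrix.mulVec_add, Matrix.mulVec_smul] at h1
    rw [Matrix.mulVec_sub, Matrix.mulVec_smul] at h2
    simp only [Pi.add_apply, Pi.sub_apply, Pi.smul_apply, smul_eq_mul, hi] at h1 h2
    nlinarith
  · intro u hAu hBu
    by_contra! hu
    apply hcon
    refine ⟨u, hu, ?_⟩
    have key : ∀ i, ∀ᶠ ε : ℝ in nhdsWithin 0 (Set.Ioi 0),
        (B *ᵥ x) i + ε * (B *ᵥ u) i ≤ d i ∧ (B *ᵥ x) i - ε * (B *ᵥ u) i ≤ d i := by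
      intro i
      by_cases hi : (B *ᵥ x) i = d i
      · have := hBu i hi
        simp [this, hi]
      · have hlt : (B *ᵥ x) i < d i := lt_of_le_of_ne (hx.2 i) hi
        apply Filter.Eventually.filter_mono nhdsWithin_le_nhds
        have c1 : Filter.Tendsto (fun ε : ℝ => (B *ᵥ x) i + ε * (B *ᵥ u) i) (nhds 0)
            (nhds ((B *ᵥ x) i + 0 * (B *ᵥ u) i)) := by
          apply Continuous.tendsto; fun_prop
        have c2 : Filter.Tendsto (fun ε : ℝ => (B *ᵥ x) i - ε * (B *ᵥ u) i) (nhds 0)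
            (nhds ((B *ᵥ x) i - 0 * (B *ᵥ u) i)) := by
          apply Continuous.tendsto; fun_prop
        filter_upwards [c1.eventually_lt_const (by simpa using hlt),
          c2.eventually_lt_const (by simpa using hlt)] with ε h1 h2
        exact ⟨h1.le, h2.le⟩
    filter_upwards [Filter.eventually_all.2 key] with ε hε
    refine ⟨⟨?_, fun i => ?_⟩, ⟨?_, fun i => ?_⟩⟩
    · rw [Matrix.mulVec_add, Matrix.mulVec_smul, hAu, hx.1]; simp
    · rw [Matrix.mulVec_add, Matrix.mulVec_smul]; exact (hε i).1
    · rw [Matrix.mulVec_sub, Matrix.mulVec_smul, hAu, hx.1]; simp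
    · rw [Matrix.mulVec_sub, Matrix.mulVec_smul]; exact (hε i).2

lemma recession_edge {p q n : Type*} [Fintype n] [Fintype q] {A : Matrix p n ℝ} {b : p → ℝ}
    {B : Matrix q n ℝ} {d : q → ℝ} {x₀ g : n → ℝ} (hx₀ : x₀ ∈ polySet A b B d)
    (hpt : PointedSet (polySet A b B d)) (hg : g ∈ circuits A B) (hB : ∀ i, (B *ᵥ g) i ≤ 0) :
    IsEdgeDirection (polySet A b B d) g := by
  classical
  have hinj := pointed_inj hpt hx₀
  have hel := (mem_circuits_iff _ _ _).1 hg
  set I : Set q := {i | (B *ᵥ g) i = 0} with hI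
  set S : Set (n → ℝ) := {x | A *ᵥ x = b ∧ ∀ i ∈ I, (B *ᵥ x) i ≤ d i} with hS
  set f : (n → ℝ) → (I → ℝ) := fun x i => d i - (B *ᵥ x) i with hf
  obtain ⟨x, hxS, hmin⟩ := WellFounded.has_min
    (measure (fun x => scard (f x))).wf S ⟨x₀, hx₀.1, fun i _ => hx₀.2 i⟩
  obtain ⟨t, ht⟩ : ∃ t : ℝ, ∀ s ≥ t, x + s • g ∈ polySet A b B d := by
    have key : ∀ i, ∀ᶠ s : ℝ in Filter.atTop, (B *ᵥ x) i + s * (B *ᵥ g) i ≤ d i := by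
      intro i
      by_cases hi : (B *ᵥ g) i = 0
      · have := hxS.2 i hi
        exact Filter.Eventually.of_forall fun s => by simpa [hi] using this
      · have hlt : (B *ᵥ g) i < 0 := lt_of_le_of_ne (hB i) hi
        have h1 : Filter.Tendsto (fun s : ℝ => s * (B *ᵥ g) i) Filter.atTop Filter.atBot :=
          Filter.tendsto_id.atTop_mul_const_of_neg hlt
        filter_upwards [h1.eventually_le_atBot (d i - (B *ᵥ x) i)] with s hs
        linarith
    obtain ⟨t, ht⟩ := Filter.eventually_atTop.1 (Filter.eventually_all.2 key)
    refine ⟨t, fun s hs => ⟨?_, fun i => ?_⟩⟩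
    · rw [Matrix.mulVec_add, Matrix.mulVec_smul, hxS.1, hg.1]; simp
    · rw [Matrix.mulVec_add, Matrix.mulVec_smul]; exact ht s hs i
  refine edge_of (x := x + t • g) (δ := 1) one_ne_zero hg.2.1 (ht t le_rfl) ?_
    {i | i ∈ I ∧ (B *ᵥ x) i = d i} ?_ ?_
  · have := ht (t + 1) (by linarith)
    rwa [add_smul, ← add_assoc] at this
  · rintro i ⟨hi1, hi2⟩
    refine ⟨?_, hi1⟩
    have : (B *ᵥ g) i = 0 := hi1
    rw [Matrix.mulVec_add, Matrix.mulVec_smul]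
    simp [this, hi2]
  · intro y hAy hBy
    by_cases hall : ∀ i ∈ I, (B *ᵥ y) i = 0
    · by_cases hy0 : y = 0
      · exact ⟨0, by simp [hy0]⟩
      · obtain ⟨c, hc⟩ := hel.unique hinj (y := y) (by simpa [LinearMap.mem_ker] using hAy) hy0
          (fun i hi h0 => hi (by simpa using hall i h0))
        have hc0 : c ≠ 0 := by
          rintro rfl
          exact hg.2.1 (by simpa using hc)
        exact ⟨c⁻¹, by rw [hc, smul_smul, inv_mul_cancel₀ hc0, one_smul]⟩
    · exfalso
      push Not at hall
      obtain ⟨i, hiI, hi⟩ := hall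
      obtain ⟨y, hAy, hBy, hi⟩ : ∃ y, A *ᵥ y = 0 ∧
          (∀ i ∈ {i | i ∈ I ∧ (B *ᵥ x) i = d i}, (B *ᵥ y) i = 0) ∧ 0 < (B *ᵥ y) i := by
        rcases lt_or_gt_of_ne hi with h | h
        · refine ⟨-y, by simp [Matrix.mulVec_neg, hAy], fun k hk => ?_, ?_⟩
          · simp [Matrix.mulVec_neg, hBy k hk]
          · simpa [Matrix.mulVec_neg] using h
        · exact ⟨y, hAy, hBy, h⟩
      have hx0 : ∀ k : I, 0 ≤ f x k := fun k => by
        have := hxS.2 k k.2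
        simp only [hf]; linarith
      have hz : ∀ k : I, f x k = 0 → (B *ᵥ y) k = 0 := by
        intro k hk
        refine hBy k ⟨k.2, ?_⟩
        simp only [hf] at hk
        linarith
      obtain ⟨t, ht, hconf, j, hj1, hj2⟩ := ratio_lemma (f x) (fun k : I => (B *ᵥ y) k) hz
        ⟨⟨i, hiI⟩, mul_pos (lt_of_le_of_ne (hx0 _) (fun h => by
          have := hz _ h.symm
          simp only at this
          linarith)) hi⟩
      have hfe : ∀ k : I, f (x + t • y) k = f x k - t * (B *ᵥ y) k := by
        intro k
        simp only [hf, Matrix.mulVec_add, Matrix.mulVec_smul, Pi.add_apply, Pi.smul_apply,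
          smul_eq_mul]
        ring
      refine hmin (x + t • y) ⟨?_, fun k hk => ?_⟩ ?_
      · rw [Matrix.mulVec_add, Matrix.mulVec_smul, hxS.1, hAy]; simp
      · have h1 := (sign_of_mul (hconf ⟨k, hk⟩) (fun h => by rw [h, hz _ h]; simp)).1 (hx0 _)
        rw [← hfe] at h1
        simp only [hf] at h1
        linarith
      · show scard _ < scard _
        refine scard_lt (fun k hk h0 => hk ?_) hj1 (by rw [hfe, hj2])
        rw [hfe, h0, hz k h0]; simp

/-- The homogenized inequality system. -/
def homL {q n : Type*} [Fintype n] (B : Matrix q n ℝ) (d : q → ℝ) :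
    ((n → ℝ) × ℝ) →ₗ[ℝ] (Option q → ℝ) where
  toFun z := fun o => o.elim (-z.2) (fun i => (B *ᵥ z.1) i - z.2 * d i)
  map_add' x y := by
    ext o
    cases o
    · simp; ring
    · simp [Matrix.mulVec_add]; ring
  map_smul' c y := by
    ext o
    cases o
    · simp
    · simp [Matrix.mulVec_smul]; ring

/-- The homogenized equality system. -/
def homW {p n : Type*} [Fintype n] (A : Matrix p n ℝ) (b : p → ℝ) :
    Submodule ℝ ((n → ℝ) × ℝ) where
  carrier := {z | A *ᵥ z.1 = z.2 • b}
  add_mem' := by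
    intro x y hx hy
    simp only [Set.mem_ofPred_eq] at hx hy
    simp [Matrix.mulVec_add, hx, hy, add_smul]
  zero_mem' := by simp
  smul_mem' := by
    intro c x hx
    simp only [Set.mem_ofPred_eq] at hx
    simp [Matrix.mulVec_smul, hx, smul_smul]

lemma minkowski {p q n : Type*} [Fintype n] [Fintype q] {A : Matrix p n ℝ} {b : p → ℝ}
    {B : Matrix q n ℝ} {d : q → ℝ} {x₀ : n → ℝ} (hx₀ : x₀ ∈ polySet A b B d)
    (hpt : PointedSet (polySet A b B d)) :
    ∃ (v r : Set (Option q) → (n → ℝ)), (∀ σ, v σ ∈ polySet A b B d) ∧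
      (∀ σ, A *ᵥ (r σ) = 0 ∧ ∀ i, (B *ᵥ (r σ)) i ≤ 0) ∧
      ∀ M : AddSubmonoid ((n → ℝ) × ℝ), (∀ σ (c : ℝ), 0 ≤ c → c • (v σ, (1 : ℝ)) ∈ M) →
        (∀ σ (c : ℝ), 0 ≤ c → c • (r σ, (0 : ℝ)) ∈ M) → ∀ x ∈ polySet A b B d, (x, (1 : ℝ)) ∈ M := by
  classical
  have hinj0 := pointed_inj hpt hx₀
  have hinj : ∀ z ∈ homW A b, homL B d z = 0 → z = 0 := by
    rintro ⟨y, τ⟩ hz hL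
    have h0 : τ = 0 := by simpa [homL] using congrFun hL none
    subst h0
    have hy : y = 0 := by
      apply hinj0 y
      · have : A *ᵥ y = (0 : ℝ) • b := hz
        simpa [LinearMap.mem_ker] using this
      · ext i
        simpa [homL] using congrFun hL (some i)
    simp [hy]
  have hsame : ∀ z z', IsElem (homW A b) (homL B d) z → IsElem (homW A b) (homL B d) z' →
      {o | homL B d z o ≠ 0} = {o | homL B d z' o ≠ 0} → ∃ c : ℝ, z = c • z' := by
    intro z z' hz hz' h
    refine hz.unique hinj hz'.1 hz'.2.1 (fun i hi => ?_)
    have : i ∈ {o | homL B d z o ≠ 0} := by rw [h]; exact hi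
    exact this
  have hv : ∀ σ : Set (Option q), ∃ v ∈ polySet A b B d, ∀ z, IsElem (homW A b) (homL B d) z →
      (∀ o, homL B d z o ≤ 0) → 0 < z.2 → {o | homL B d z o ≠ 0} = σ →
      z = z.2 • (v, (1 : ℝ)) := by
    intro σ
    by_cases h : ∃ z, IsElem (homW A b) (homL B d) z ∧
      (∀ o, homL B d z o ≤ 0) ∧ 0 < z.2 ∧ {o | homL B d z o ≠ 0} = σ
    · obtain ⟨z, h1, h2, h3, h4⟩ := h
      refine ⟨z.2⁻¹ • z.1, ⟨?_, fun i => ?_⟩, ?_⟩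
      · have : A *ᵥ z.1 = z.2 • b := h1.1
        rw [Matrix.mulVec_smul, this, smul_smul, inv_mul_cancel₀ h3.ne', one_smul]
      · have := h2 (some i)
        simp only [homL, LinearMap.coe_mk, AddHom.coe_mk, Option.elim_some] at this
        rw [Matrix.mulVec_smul, Pi.smul_apply, smul_eq_mul, inv_mul_le_iff₀ h3]
        linarith
      · intro z' h1' h2' h3' h4'
        obtain ⟨c, hc⟩ := hsame z' z h1' h1 (h4'.trans h4.symm)
        rw [hc]
        ext
        · simp [mul_assoc]
          field_simp
          simp
        · simp
    · refine ⟨x₀, hx₀, fun z h1 h2 h3 h4 => absurd ⟨z, h1, h2, h3, h4⟩ h⟩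
  have hr : ∀ σ : Set (Option q), ∃ r, (A *ᵥ r = 0 ∧ ∀ i, (B *ᵥ r) i ≤ 0) ∧
      ∀ z, IsElem (homW A b) (homL B d) z →
      (∀ o, homL B d z o ≤ 0) → z.2 = 0 → {o | homL B d z o ≠ 0} = σ →
      ∃ c : ℝ, 0 ≤ c ∧ z = c • (r, (0 : ℝ)) := by
    intro σ
    by_cases h : ∃ z, IsElem (homW A b) (homL B d) z ∧
      (∀ o, homL B d z o ≤ 0) ∧ z.2 = 0 ∧ {o | homL B d z o ≠ 0} = σ
    · obtain ⟨⟨r, τ⟩, h1, h2, h3, h4⟩ := h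
      simp only at h3
      subst h3
      refine ⟨r, ⟨?_, fun i => ?_⟩, ?_⟩
      · have : A *ᵥ r = (0 : ℝ) • b := h1.1
        simpa using this
      · simpa [homL] using h2 (some i)
      · intro z' h1' h2' h3' h4'
        obtain ⟨c, hc⟩ := hsame z' _ h1' h1 (h4'.trans h4.symm)
        rcases le_or_gt 0 c with h | h
        · exact ⟨c, h, hc⟩
        · exfalso
          apply h1'.2.1
          apply hinj _ h1'.1
          ext o
          refine le_antisymm (h2' o) ?_
          rw [hc, map_smul, Pi.smul_apply, smul_eq_mul]
          exact mul_nonneg_of_nonpos_of_nonpos h.le (h2 o)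
    · exact ⟨0, by simp, fun z h1 h2 h3 h4 => absurd ⟨z, h1, h2, h3, h4⟩ h⟩
  choose v hvP hv using hv
  choose r hrP hr using hr
  refine ⟨v, r, hvP, hrP, fun M hM1 hM2 x hx => ?_⟩
  have hmem : (x, (1 : ℝ)) ∈ homW A b := by
    show A *ᵥ x = (1 : ℝ) • b
    simpa using hx.1
  have hneg : ∀ o, homL B d (x, (1 : ℝ)) o ≤ 0 := by
    intro o
    cases o
    · simp [homL]
    · simpa [homL] using hx.2 _
  have hdec := conformal_decomp hinj _ _ hmem rfl
  refine AddSubmonoid.closure_le.2 ?_ hdec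
  rintro z ⟨hz1, hz2⟩
  have hz3 : ∀ o, homL B d z o ≤ 0 := fun o => ((hz2 o).2 (hneg o)).2
  have hτ : 0 ≤ z.2 := by simpa [homL] using hz3 none
  rcases hτ.eq_or_lt with h | h
  · obtain ⟨c, hc, hzc⟩ := hr _ z hz1 hz3 h.symm rfl
    rw [SetLike.mem_coe, hzc]
    exact hM2 _ c hc
  · rw [SetLike.mem_coe, hv _ z hz1 hz3 h rfl]
    exact hM1 _ _ hτ

/-! ### Irredundancy of standard-form polyhedra -/

lemma dir_of {n : Type*} [Fintype n] {S : Set (n → ℝ)} {D : Submodule ℝ (n → ℝ)} {x₀ : n → ℝ}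
    (hx₀ : x₀ ∈ S) (h1 : ∀ x ∈ S, x - x₀ ∈ D)
    (h2 : ∀ u ∈ D, ∃ ε : ℝ, ε ≠ 0 ∧ x₀ + ε • u ∈ S) : (affineSpan ℝ S).direction = D := by
  apply le_antisymm
  · rw [direction_affineSpan, vectorSpan_def, Submodule.span_le]
    rintro _ ⟨y, hy, z, hz, rfl⟩
    have := D.sub_mem (h1 y hy) (h1 z hz)
    simpa using this
  · intro u hu
    obtain ⟨ε, hε, hm⟩ := h2 u hu
    have : (x₀ + ε • u) -ᵥ x₀ ∈ (affineSpan ℝ S).direction :=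
      AffineSubspace.vsub_mem_direction (mem_affineSpan ℝ hm) (mem_affineSpan ℝ hx₀)
    simp only [vsub_eq_sub, add_sub_cancel_left] at this
    have h2 := Submodule.smul_mem _ ε⁻¹ this
    simpa [smul_smul, hε] using h2

lemma exists_small {n : Type*} [Fintype n] (x u : n → ℝ) (h : ∀ i, 0 < x i ∨ (x i = 0 ∧ u i = 0)) :
    ∃ ε : ℝ, ε ≠ 0 ∧ ∀ i, 0 ≤ x i + ε * u i := by
  have key : ∀ i, ∀ᶠ ε : ℝ in nhdsWithin 0 (Set.Ioi 0), 0 ≤ x i + ε * u i := by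
    intro i
    rcases h i with hi | ⟨h1, h2⟩
    · apply Filter.Eventually.filter_mono nhdsWithin_le_nhds
      have c1 : Filter.Tendsto (fun ε : ℝ => x i + ε * u i) (nhds 0) (nhds (x i + 0 * u i)) := by
        apply Continuous.tendsto; fun_prop
      filter_upwards [c1.eventually_const_lt (u := 0) (by simpa using hi)] with ε h1
      exact h1.le
    · simp [h1, h2]
  obtain ⟨ε, h1, h2⟩ := ((Filter.eventually_all.2 key).and
    (self_mem_nhdsWithin : ∀ᶠ ε : ℝ in nhdsWithin 0 (Set.Ioi 0), ε ∈ Set.Ioi 0)).exists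
  exact ⟨ε, ne_of_gt h2, h1⟩

lemma std_mem {p n : Type*} [Fintype n] [DecidableEq n] (A : Matrix p n ℝ) (b : p → ℝ)
    (x : n → ℝ) : x ∈ polySet A b (-1 : Matrix n n ℝ) 0 ↔ A *ᵥ x = b ∧ ∀ i, 0 ≤ x i := by
  simp [polySet, Matrix.neg_mulVec, Pi.le_def]

lemma std_irred {p n : Type*} [Fintype n] [DecidableEq n] (A : Matrix p n ℝ) (b : p → ℝ)
    (x₀ : n → ℝ) (hx₀ : A *ᵥ x₀ = b) (hpos : ∀ i, 0 < x₀ i)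
    (hfac : ∀ i, ∃ x, A *ᵥ x = b ∧ x i = 0 ∧ ∀ j, j ≠ i → 0 < x j) :
    Irredundant A b (-1 : Matrix n n ℝ) 0 (polySet A b (-1 : Matrix n n ℝ) 0) := by
  have hx₀P : x₀ ∈ polySet A b (-1 : Matrix n n ℝ) 0 :=
    (std_mem _ _ _).2 ⟨hx₀, fun i => (hpos i).le⟩
  have hdir : (affineSpan ℝ (polySet A b (-1 : Matrix n n ℝ) 0)).direction =
      LinearMap.ker A.mulVecLin := by
    refine dir_of hx₀P (fun x hx => ?_) (fun u hu => ?_)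
    · rw [std_mem] at hx
      simp [LinearMap.mem_ker, Matrix.mulVec_sub, hx.1, hx₀]
    · obtain ⟨ε, h1, h2⟩ := exists_small x₀ u (fun i => Or.inl (hpos i))
      rw [LinearMap.mem_ker, Matrix.mulVecLin_apply] at hu
      refine ⟨ε, h1, (std_mem _ _ _).2 ⟨?_, h2⟩⟩
      rw [Matrix.mulVec_add, Matrix.mulVec_smul, hu, hx₀]; simp
  refine ⟨rfl, ?_, fun i => ⟨Or.inr ⟨-Pi.single i 1, 0, ?_, ?_, ?_⟩, ?_⟩⟩
  · ext x
    rw [SetLike.mem_coe, ← AffineSubspace.vsub_right_mem_direction_iff_mem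
      (mem_affineSpan ℝ hx₀P), hdir]
    simp [LinearMap.mem_ker, Matrix.mulVec_sub, hx₀, sub_eq_zero]
  · intro y hy
    rw [std_mem] at hy
    simpa using hy.2 i
  · obtain ⟨x, h1, h2, h3⟩ := hfac i
    refine ⟨x, (std_mem _ _ _).2 ⟨h1, fun j => ?_⟩, by simpa using h2⟩
    by_cases h : j = i
    · rw [h, h2]
    · exact (h3 j h).le
  · ext x
    simp [Matrix.neg_mulVec]
  · obtain ⟨x, h1, h2, h3⟩ := hfac i
    have h4 : ∀ j, 0 ≤ x j := fun j => by
      by_cases h : j = i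
      · rw [h, h2]
      · exact (h3 j h).le
    set f : LinearMap.ker A.mulVecLin →ₗ[ℝ] ℝ :=
      (LinearMap.proj i : (n → ℝ) →ₗ[ℝ] ℝ).domRestrict _ with hf
    have hf0 : f ≠ 0 := by
      intro h0
      have hm : x₀ - x ∈ LinearMap.ker A.mulVecLin := by
        simp [LinearMap.mem_ker, Matrix.mulVec_sub, h1, hx₀]
      have := congrArg (fun F => F ⟨_, hm⟩) h0
      simp [hf, h2] at this
      linarith [hpos i]
    have hd2 : (affineSpan ℝ {x ∈ polySet A b (-1 : Matrix n n ℝ) 0 |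
        ((-1 : Matrix n n ℝ) *ᵥ x) i = (0 : n → ℝ) i}).direction =
        (LinearMap.ker f).map (LinearMap.ker A.mulVecLin).subtype := by
      refine dir_of (x₀ := x) ⟨(std_mem _ _ _).2 ⟨h1, h4⟩, by simp [Matrix.neg_mulVec, h2]⟩
        (fun y hy => ?_) (fun u hu => ?_)
      · obtain ⟨hy1, hy2⟩ := hy
        rw [std_mem] at hy1
        have hm : y - x ∈ LinearMap.ker A.mulVecLin := by
          simp [LinearMap.mem_ker, Matrix.mulVec_sub, h1, hy1.1]
        refine ⟨⟨_, hm⟩, ?_, rfl⟩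
        simp [Matrix.neg_mulVec] at hy2
        simp [hf, h2, hy2]
      · obtain ⟨⟨u, hu⟩, hu2, rfl⟩ := hu
        simp [hf] at hu2
        obtain ⟨ε, h5, h6⟩ := exists_small x u (fun j => by
          by_cases h : j = i
          · exact Or.inr (by rw [h]; exact ⟨h2, hu2⟩)
          · exact Or.inl (h3 j h))
        rw [LinearMap.mem_ker, Matrix.mulVecLin_apply] at hu
        refine ⟨ε, h5, (std_mem _ _ _).2 ⟨?_, h6⟩, ?_⟩
        · simp [Matrix.mulVec_add, Matrix.mulVec_smul, hu, h1]
        · simp [Matrix.neg_mulVec, h2, hu2]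
    rw [spanDim, spanDim, hd2, hdir, Submodule.finrank_map_subtype_eq]
    exact Module.Dual.finrank_ker_add_one_of_ne_zero (f := f) hf0

lemma std_pointed {p n : Type*} [Fintype n] [DecidableEq n] (A : Matrix p n ℝ) (b : p → ℝ) :
    PointedSet (polySet A b (-1 : Matrix n n ℝ) 0) := by
  intro x v h
  ext i
  by_contra hv
  have := ((std_mem _ _ _).1 (h (-(x i + 1) / v i))).2 i
  simp only [Pi.add_apply, Pi.smul_apply, smul_eq_mul, Pi.zero_apply] at this hv
  rw [div_mul_cancel₀ _ hv] at this
  linarith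

/-- The right-hand side of the equivalence. -/
def RHS {n pP qP : ℕ} (AP : Matrix (Fin pP) (Fin n) ℝ) (BP : Matrix (Fin qP) (Fin n) ℝ)
    (P : Set (Fin n → ℝ)) : Prop :=
  (∀ (m pQ qQ : ℕ)
        (AQ : Matrix (Fin pQ) (Fin m) ℝ) (bQ : Fin pQ → ℝ)
        (BQ : Matrix (Fin qQ) (Fin m) ℝ) (dQ : Fin qQ → ℝ)
        (Q : Set (Fin m → ℝ)) (π : (Fin m → ℝ) →ₗ[ℝ] (Fin n → ℝ)),
        PointedSet Q → Irredundant AQ bQ BQ dQ Q → (fun x => π x) '' Q = P →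
        circuits AP BP ⊆ (fun x => π x) '' circuits AQ BQ)

lemma std_rhs {n pP qP : ℕ} {AP : Matrix (Fin pP) (Fin n) ℝ} {BP : Matrix (Fin qP) (Fin n) ℝ}
    {P : Set (Fin n → ℝ)} (H : RHS AP BP P) {ι α : Type*} [Fintype ι] [Fintype α]
    (A : (ι → ℝ) →ₗ[ℝ] (α → ℝ)) (b : α → ℝ) (π : (ι → ℝ) →ₗ[ℝ] (Fin n → ℝ))
    (hpos : ∃ x, A x = b ∧ ∀ i, 0 < x i)
    (hfac : ∀ i, ∃ x, A x = b ∧ x i = 0 ∧ ∀ j, j ≠ i → 0 < x j)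
    (hπ : ∀ y, y ∈ P ↔ ∃ x, A x = b ∧ (∀ i, 0 ≤ x i) ∧ π x = y)
    {g : Fin n → ℝ} (hg : g ∈ circuits AP BP) :
    ∃ x, A x = 0 ∧ π x = g ∧ ∀ y, A y = 0 → y ≠ 0 → (∀ i, y i ≠ 0 → x i ≠ 0) →
      ∃ c : ℝ, x = c • y := by
  classical
  let e := (Fintype.equivFin ι).symm
  let ea := (Fintype.equivFin α).symm
  let T : (Fin (Fintype.card ι) → ℝ) →ₗ[ℝ] (ι → ℝ) := LinearMap.funLeft ℝ ℝ e.symm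
  let T' : (ι → ℝ) →ₗ[ℝ] (Fin (Fintype.card ι) → ℝ) := LinearMap.funLeft ℝ ℝ e
  have hTT' : ∀ x, T (T' x) = x := fun x => by ext i; simp [T, T', LinearMap.funLeft_apply]
  have hT'T : ∀ x, T' (T x) = x := fun x => by ext i; simp [T, T', LinearMap.funLeft_apply]
  have hTa : ∀ x i, T x i = x (e.symm i) := fun x i => rfl
  have hT'a : ∀ x i, T' x i = x (e i) := fun x i => rfl
  let S : (α → ℝ) →ₗ[ℝ] (Fin (Fintype.card α) → ℝ) := LinearMap.funLeft ℝ ℝ ea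
  have hS : Function.Injective S := LinearMap.funLeft_injective_of_surjective ℝ ℝ _ ea.surjective
  let M := LinearMap.toMatrix' (S ∘ₗ A ∘ₗ T)
  have hM : ∀ y, M *ᵥ y = S (A (T y)) := fun y => by
    simp [M, LinearMap.toMatrix'_mulVec]
  have hM' : ∀ y c, M *ᵥ y = S c ↔ A (T y) = c := fun y c => by rw [hM]; exact hS.eq_iff
  have hM0 : ∀ y, M *ᵥ y = 0 ↔ A (T y) = 0 := fun y => by rw [← hM' y 0, map_zero]
  obtain ⟨x₀, hx1, hx2⟩ := hpos
  have hirr := std_irred M (S b) (T' x₀) (by rw [hM', hTT', hx1]) (fun i => hx2 _) (fun i => by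
    obtain ⟨x, h1, h2, h3⟩ := hfac (e i)
    exact ⟨T' x, by rw [hM', hTT', h1], h2, fun j hj => h3 _ (e.injective.ne hj)⟩)
  have := H _ _ _ M (S b) (-1) 0 _ (π ∘ₗ T) (std_pointed M (S b)) hirr (by
    ext y
    rw [hπ]
    constructor
    · rintro ⟨x, hx, rfl⟩
      rw [std_mem, hM'] at hx
      exact ⟨T x, hx.1, fun i => hx.2 _, rfl⟩
    · rintro ⟨x, h1, h2, h3⟩
      refine ⟨T' x, (std_mem _ _ _).2 ⟨by rw [hM', hTT', h1], fun i => h2 _⟩, ?_⟩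
      simp [hTT', h3]) hg
  obtain ⟨x, hx, hxg⟩ := this
  rw [mem_circuits_iff] at hx
  refine ⟨T x, ?_, hxg, fun y hy hy0 hs => ?_⟩
  · have := hx.1
    rwa [LinearMap.mem_ker, Matrix.mulVecLin_apply, hM0] at this
  · obtain ⟨c, hc⟩ := hx.unique (by
      intro v _ hv
      simpa [Matrix.neg_mulVec] using hv) (y := T' y) (by
      rw [LinearMap.mem_ker, Matrix.mulVecLin_apply, hM0, hTT', hy]) (by
      intro h0
      apply hy0
      rw [← hTT' y, h0, map_zero]) (by
      intro i hi
      simp only [Matrix.mulVecLin_apply, Matrix.neg_mulVec, Matrix.one_mulVec, Pi.neg_apply, ne_eq,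
        neg_eq_zero] at hi ⊢
      have := hs (e i) hi
      simpa [hTa] using this)
    exact ⟨c, by rw [hc, map_smul, hTT']⟩

/-! ### Joins of squares -/

set_option linter.unusedSectionVars false
set_option linter.unusedSimpArgs false
set_option linter.unnecessarySeqFocus false

section squares
variable {J K : Type*} [Fintype J] [Fintype K]

/-- Equality constraints of a join of squares: each square is given by four nonnegative coordinates
`x (j, e, f)` with `x (j, 0, 0) + x (j, 0, 1) = x (j, 1, 0) + x (j, 1, 1)`, and the total weight is
the sum of these values. -/
def sqA : ((J × Bool × Bool) ⊕ K → ℝ) →ₗ[ℝ] (Option J → ℝ) where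
  toFun x := fun o => o.elim (∑ j, (x (.inl (j, false, false)) + x (.inl (j, false, true))))
    (fun j => x (.inl (j, false, false)) + x (.inl (j, false, true))
      - x (.inl (j, true, false)) - x (.inl (j, true, true)))
  map_add' x y := by
    ext o
    cases o
    · simp only [Option.elim_none, Pi.add_apply, ← Finset.sum_add_distrib]
      exact Finset.sum_congr rfl fun _ _ => by ring
    · simp; ring
  map_smul' c y := by
    ext o
    cases o
    · simp [Finset.mul_sum, mul_add]
    · simp; ring

lemma sqA_none (x : (J × Bool × Bool) ⊕ K → ℝ) : sqA x none =
    ∑ j, (x (.inl (j, false, false)) + x (.inl (j, false, true))) := rfl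

lemma sqA_some (x : (J × Bool × Bool) ⊕ K → ℝ) (j : J) : sqA x (some j) =
    x (.inl (j, false, false)) + x (.inl (j, false, true))
      - x (.inl (j, true, false)) - x (.inl (j, true, true)) := rfl

variable [DecidableEq J] [DecidableEq K]

lemma sqA_single_inl (j : J) (e f : Bool) :
    sqA (Pi.single (Sum.inl (j, e, f)) 1 : (J × Bool × Bool) ⊕ K → ℝ) =
      Pi.single none (if e then 0 else 1) + Pi.single (some j) (if e then -1 else 1) := by
  ext o
  cases o with
  | none => cases e <;> cases f <;> simp [sqA_none, Pi.single_apply]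
  | some i => cases e <;> cases f <;> simp [sqA_some, Pi.single_apply] <;> split_ifs <;> simp

lemma sqA_single_inr (k : K) :
    sqA (Pi.single (Sum.inr k) 1 : (J × Bool × Bool) ⊕ K → ℝ) = 0 := by
  ext o
  cases o with
  | none => simp [sqA_none, Pi.single_apply]
  | some i => simp [sqA_some, Pi.single_apply]

/-- The indicator vector of a corner of square `j`. -/
def sqCorner (K : Type*) [DecidableEq K] (j : J) (f f' : Bool) : (J × Bool × Bool) ⊕ K → ℝ :=
  Pi.single (Sum.inl (j, false, f)) 1 + Pi.single (Sum.inl (j, true, f')) 1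

lemma sqA_corner (j : J) (f f' : Bool) : sqA (sqCorner K j f f') = Pi.single none 1 := by
  rw [sqCorner, map_add, sqA_single_inl, sqA_single_inl]
  ext o
  cases o <;> simp [Pi.single_apply] <;> split_ifs <;> simp

/-- The projection. -/
def sqπ {n : ℕ} (c : J → Bool → Bool → (Fin n → ℝ)) (r : K → (Fin n → ℝ)) :
    ((J × Bool × Bool) ⊕ K → ℝ) →ₗ[ℝ] (Fin n → ℝ) :=
  Fintype.linearCombination ℝ (Sum.elim (fun p => c p.1 p.2.1 p.2.2) r)

lemma sqπ_single {n : ℕ} (c : J → Bool → Bool → (Fin n → ℝ)) (r : K → (Fin n → ℝ))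
    (i : (J × Bool × Bool) ⊕ K) :
    sqπ c r (Pi.single i 1) = Sum.elim (fun p => c p.1 p.2.1 p.2.2) r i := by
  simp [sqπ, Fintype.linearCombination_apply_single]

lemma sqπ_corner {n : ℕ} (c : J → Bool → Bool → (Fin n → ℝ)) (r : K → (Fin n → ℝ))
    (j : J) (f f' : Bool) :
    sqπ c r (sqCorner K j f f') = c j false f + c j true f' := by
  simp [sqCorner, sqπ_single]

lemma square_bound {z0 z1 w0 w1 p0 p1 q0 q1 β : ℝ} (h0 : 0 ≤ z0) (h1 : 0 ≤ z1) (h2 : 0 ≤ w0)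
    (h3 : 0 ≤ w1) (hs : z0 + z1 - w0 - w1 = 0) (h00 : p0 + q0 ≤ β) (h01 : p0 + q1 ≤ β)
    (h10 : p1 + q0 ≤ β) (h11 : p1 + q1 ≤ β) :
    z0 * p0 + z1 * p1 + w0 * q0 + w1 * q1 ≤ (z0 + z1) * β := by
  have a1 : z0 * p0 + z1 * p1 ≤ (z0 + z1) * max p0 p1 := by
    nlinarith [le_max_left p0 p1, le_max_right p0 p1]
  have a2 : w0 * q0 + w1 * q1 ≤ (z0 + z1) * max q0 q1 := by
    have : z0 + z1 = w0 + w1 := by linarith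
    rw [this]
    nlinarith [le_max_left q0 q1, le_max_right q0 q1]
  have a3 : max p0 p1 + max q0 q1 ≤ β := by
    rcases max_choice p0 p1 with h | h <;> rcases max_choice q0 q1 with h' | h' <;> rw [h, h'] <;>
      assumption
  nlinarith

lemma sqJoin_le {n : ℕ} (c : J → Bool → Bool → (Fin n → ℝ)) (r : K → (Fin n → ℝ))
    (φ : (Fin n → ℝ) →ₗ[ℝ] ℝ) (β : ℝ) (h1 : ∀ j f f', φ (c j false f + c j true f') ≤ β)
    (h2 : ∀ k, φ (r k) ≤ 0) (z : (J × Bool × Bool) ⊕ K → ℝ) (hz : ∀ i, 0 ≤ z i)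
    (hA : sqA z = Pi.single none 1) : φ (sqπ c r z) ≤ β := by
  have hnone := congrFun hA none
  rw [sqA_none] at hnone
  simp only [Pi.single_eq_same] at hnone
  have e1 : φ (sqπ c r z) = (∑ j, (z (.inl (j, false, false)) * φ (c j false false) +
      z (.inl (j, false, true)) * φ (c j false true) +
      z (.inl (j, true, false)) * φ (c j true false) +
      z (.inl (j, true, true)) * φ (c j true true))) + ∑ k, z (.inr k) * φ (r k) := by
    simp only [sqπ, Fintype.linearCombination_apply, map_sum, map_add, map_smul, smul_eq_mul,
      Fintype.sum_sum_type, Sum.elim_inl, Sum.elim_inr, Fintype.sum_prod_type, Fintype.sum_bool]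
    congr 1
    exact Finset.sum_congr rfl fun _ _ => by ring
  rw [e1]
  have b2 : ∑ k, z (.inr k) * φ (r k) ≤ 0 :=
    Finset.sum_nonpos fun k _ => mul_nonpos_of_nonneg_of_nonpos (hz _) (h2 k)
  have b1 : (∑ j, (z (.inl (j, false, false)) * φ (c j false false) +
      z (.inl (j, false, true)) * φ (c j false true) +
      z (.inl (j, true, false)) * φ (c j true false) +
      z (.inl (j, true, true)) * φ (c j true true))) ≤
      ∑ j, (z (.inl (j, false, false)) + z (.inl (j, false, true))) * β := by
    refine Finset.sum_le_sum fun j _ => ?_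
    have hj := congrFun hA (some j)
    rw [sqA_some] at hj
    have h := h1 j
    simp only [map_add] at h
    exact square_bound (hz _) (hz _) (hz _) (hz _) (by simpa using hj) (h _ _) (h _ _) (h _ _)
      (h _ _)
  rw [← Finset.sum_mul, hnone] at b1
  linarith

lemma square_join {n pP qP : ℕ} {AP : Matrix (Fin pP) (Fin n) ℝ} {bP : Fin pP → ℝ}
    {BP : Matrix (Fin qP) (Fin n) ℝ} {dP : Fin qP → ℝ} [Nonempty J]
    (H : RHS AP BP (polySet AP bP BP dP)) {g : Fin n → ℝ} (hg : g ∈ circuits AP BP)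
    (c : J → Bool → Bool → (Fin n → ℝ)) (r : K → (Fin n → ℝ))
    (hc : ∀ j f f', c j false f + c j true f' ∈ polySet AP bP BP dP)
    (hr : ∀ k, AP *ᵥ r k = 0 ∧ ∀ i, (BP *ᵥ r k) i ≤ 0)
    (hsurj : ∀ x ∈ polySet AP bP BP dP, ∃ z : (J × Bool × Bool) ⊕ K → ℝ,
      (∀ i, 0 ≤ z i) ∧ sqA z = Pi.single none 1 ∧ sqπ c r z = x)
    (n1 : ∀ k (t : ℝ), t • r k ≠ g)
    (n2 : ∀ j e (t : ℝ), t • (c j e false - c j e true) ≠ g)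
    (n3 : ∀ j i, j ≠ i → ∀ f f' k k' (t : ℝ),
      t • ((c j false f + c j true f') - (c i false k + c i true k')) ≠ g) : False := by
  have hg0 : g ≠ 0 := hg.2.1
  have hN : (0 : ℝ) < Fintype.card J := by exact_mod_cast Fintype.card_pos
  obtain ⟨x, hxA, hxπ, hx⟩ := std_rhs H (sqA (J := J) (K := K)) (Pi.single none 1) (sqπ c r)
    (by
      refine ⟨fun _ => 1 / (2 * Fintype.card J), ?_, fun i => by positivity⟩
      ext o
      cases o with
      | none => simp [sqA_none]; field_simp; norm_num
      | some j => simp [sqA_some])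
    (by
      rintro (⟨j, e, f⟩ | k)
      · refine ⟨fun i => 1 / (2 * Fintype.card J) +
          (Pi.single (Sum.inl (j, e, !f)) (1 / (2 * Fintype.card J)) : _ → ℝ) i -
          (Pi.single (Sum.inl (j, e, f)) (1 / (2 * Fintype.card J)) : _ → ℝ) i, ?_, ?_, ?_⟩
        · ext o
          cases o with
          | none =>
            cases e <;> cases f <;>
              simp [sqA_none, Pi.single_apply, Finset.sum_add_distrib] <;> field_simp <;> norm_num
          | some i =>
            cases e <;> cases f <;>
              simp [sqA_some, Pi.single_apply] <;> ring
        · cases f <;> simp [Pi.single_apply]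
        · intro i hi
          have : (0 : ℝ) ≤ (Pi.single (Sum.inl (j, e, !f)) (1 / (2 * Fintype.card J)) :
              (J × Bool × Bool) ⊕ K → ℝ) i := by
            rw [Pi.single_apply]; split_ifs <;> positivity
          beta_reduce
          rw [Pi.single_eq_of_ne (M := fun _ => ℝ) hi]
          have : (0 : ℝ) < 1 / (2 * Fintype.card J) := by positivity
          linarith
      · refine ⟨Sum.elim (fun _ => 1 / (2 * Fintype.card J)) (fun i => if i = k then 0 else 1),
          ?_, by simp, ?_⟩
        · ext o
          cases o with
          | none => simp [sqA_none]; field_simp; norm_num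
          | some j => simp [sqA_some]
        · rintro (i | i) hi
          · simp only [Sum.elim_inl]; positivity
          · have : i ≠ k := fun h => hi (by rw [h])
            simp [this])
    (by
      intro y
      constructor
      · intro hy
        obtain ⟨z, h1, h2, h3⟩ := hsurj y hy
        exact ⟨z, h2, h1, h3⟩
      · rintro ⟨z, h2, h1, rfl⟩
        refine ⟨?_, fun i => ?_⟩
        · ext i
          apply le_antisymm
          · refine sqJoin_le c r (LinearMap.proj i ∘ₗ AP.mulVecLin) (bP i) (fun j f f' => ?_)
              (fun k => ?_) z h1 h2
            · simp [-Matrix.mulVec_add, (hc j f f').1]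
            · simp [(hr k).1]
          · have := sqJoin_le c r (-(LinearMap.proj i ∘ₗ AP.mulVecLin)) (-bP i) (fun j f f' => ?_)
              (fun k => ?_) z h1 h2
            · simpa using this
            · have := congrFun (hc j f f').1 i
              simp only [LinearMap.neg_apply, LinearMap.comp_apply, Matrix.mulVecLin_apply,
                LinearMap.proj_apply, this, le_refl]
            · simp [(hr k).1]
        · refine sqJoin_le c r (LinearMap.proj i ∘ₗ BP.mulVecLin) (dP i) (fun j f f' => ?_)
            (fun k => ?_) z h1 h2
          · exact (hc j f f').2 i
          · exact (hr k).2 i) hg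
  -- rays
  have hray : ∀ k, x (.inr k) = 0 := by
    intro k
    by_contra hk
    obtain ⟨t, ht⟩ := hx (Pi.single (.inr k) 1) (sqA_single_inr k) (by simp) (fun i hi => by
      by_cases h : i = .inr k
      · rw [h]; exact hk
      · simp [Pi.single_eq_of_ne h] at hi)
    apply n1 k t
    rw [← hxπ, ht, map_smul, sqπ_single]; rfl
  have hsq : ∀ j, x (.inl (j, false, false)) + x (.inl (j, false, true)) = 0 := by
    by_contra! hj
    obtain ⟨j, hj⟩ := hj
    have hsum := congrFun hxA none
    rw [sqA_none] at hsum
    obtain ⟨i, hij, hi⟩ : ∃ i, j ≠ i ∧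
        x (.inl (i, false, false)) + x (.inl (i, false, true)) ≠ 0 := by
      by_contra! hcon
      rw [Finset.sum_eq_single j (fun i _ h => hcon i h.symm) (by simp)] at hsum
      exact hj hsum
    have hcor : ∀ j, x (.inl (j, false, false)) + x (.inl (j, false, true)) ≠ 0 →
        ∃ f f', x (.inl (j, false, f)) ≠ 0 ∧ x (.inl (j, true, f')) ≠ 0 := by
      intro j hj
      have hjs := congrFun hxA (some j)
      rw [sqA_some, Pi.zero_apply] at hjs
      have a1 : ∃ f, x (.inl (j, false, f)) ≠ 0 := by
        by_contra! h
        exact hj (by simp [h])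
      have a2 : ∃ f, x (.inl (j, true, f)) ≠ 0 := by
        by_contra! h
        apply hj
        rw [h, h] at hjs
        linarith
      obtain ⟨f, hf⟩ := a1
      obtain ⟨f', hf'⟩ := a2
      exact ⟨f, f', hf, hf'⟩
    obtain ⟨f, f', h1, h2⟩ := hcor j hj
    obtain ⟨k, k', h3, h4⟩ := hcor i hi
    obtain ⟨t, ht⟩ := hx (sqCorner K j f f' - sqCorner K i k k')
      (by rw [map_sub, sqA_corner, sqA_corner, sub_self])
      (by
        intro h0
        have := congrFun h0 (.inl (j, false, f))
        simp [sqCorner, Pi.single_apply, hij] at this)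
      (fun l hl h0 => by
        apply hl
        have b1 : l ≠ .inl (j, false, f) := by rintro rfl; exact h1 h0
        have b2 : l ≠ .inl (j, true, f') := by rintro rfl; exact h2 h0
        have b3 : l ≠ .inl (i, false, k) := by rintro rfl; exact h3 h0
        have b4 : l ≠ .inl (i, true, k') := by rintro rfl; exact h4 h0
        simp [sqCorner, Pi.single_eq_of_ne b1, Pi.single_eq_of_ne b2, Pi.single_eq_of_ne b3,
          Pi.single_eq_of_ne b4])
    apply n3 j i hij f f' k k' t
    rw [← hxπ, ht, map_smul, map_sub, sqπ_corner, sqπ_corner]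
  have hsq2 : ∀ j e, x (.inl (j, e, false)) + x (.inl (j, e, true)) = 0 := by
    intro j e
    cases e
    · exact hsq j
    · have hjs := congrFun hxA (some j)
      rw [sqA_some, Pi.zero_apply] at hjs
      have := hsq j
      linarith
  have hzero : ∀ j e, x (.inl (j, e, false)) = 0 := by
    intro j e
    by_contra h1
    have h2 : x (.inl (j, e, true)) ≠ 0 := fun h => h1 (by have := hsq2 j e; linarith)
    obtain ⟨t, ht⟩ := hx (Pi.single (.inl (j, e, false)) 1 - Pi.single (.inl (j, e, true)) 1)
      (by rw [map_sub, sqA_single_inl, sqA_single_inl, sub_self])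
      (by
        intro h0
        have := congrFun h0 (.inl (j, e, false))
        simp [Pi.single_apply] at this)
      (fun l hl h0 => by
        apply hl
        have b1 : l ≠ .inl (j, e, false) := by rintro rfl; exact h1 h0
        have b2 : l ≠ .inl (j, e, true) := by rintro rfl; exact h2 h0
        simp [Pi.single_eq_of_ne b1, Pi.single_eq_of_ne b2])
    apply n2 j e t
    rw [← hxπ, ht, map_smul, map_sub, sqπ_single, sqπ_single]; rfl
  apply hg0
  have : x = 0 := by
    ext i
    rcases i with ⟨j, e, f⟩ | k
    · cases f
      · exact hzero j e
      · have := hsq2 j e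
        rw [hzero j e] at this
        simpa using this
    · exact hray k
  rw [← hxπ, this, map_zero]

/-- The cone of points covered by the homogenized join of squares. -/
def sqCone {n : ℕ} (c : J → Bool → Bool → (Fin n → ℝ)) (r : K → (Fin n → ℝ)) :
    AddSubmonoid ((Fin n → ℝ) × ℝ) where
  carrier := {w | ∃ z : (J × Bool × Bool) ⊕ K → ℝ,
      (∀ i, 0 ≤ z i) ∧ sqA z = Pi.single none w.2 ∧ sqπ c r z = w.1}
  add_mem' := by
    rintro a b ⟨z, h1, h2, h3⟩ ⟨z', h1', h2', h3'⟩
    exact ⟨z + z', fun i => add_nonneg (h1 i) (h1' i),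
      by rw [map_add, h2, h2', ← Pi.single_add]; rfl, by rw [map_add, h3, h3']; rfl⟩
  zero_mem' := ⟨0, by simp, by simp, by simp⟩

lemma sqCone_smul {n : ℕ} (c : J → Bool → Bool → (Fin n → ℝ)) (r : K → (Fin n → ℝ))
    {w : (Fin n → ℝ) × ℝ} (hw : w ∈ sqCone c r) {t : ℝ} (ht : 0 ≤ t) : t • w ∈ sqCone c r := by
  obtain ⟨z, h1, h2, h3⟩ := hw
  refine ⟨t • z, fun i => mul_nonneg ht (h1 i), ?_, ?_⟩
  · rw [map_smul, h2, ← Pi.single_smul]; rfl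
  · rw [map_smul, h3]; rfl

lemma sqCorner_nonneg (j : J) (f f' : Bool) (i) : 0 ≤ sqCorner K j f f' i := by
  have : ∀ k, (0 : ℝ) ≤ (Pi.single k 1 : (J × Bool × Bool) ⊕ K → ℝ) i := by
    intro k
    rw [Pi.single_apply]; split_ifs <;> simp
  exact add_nonneg (this _) (this _)

lemma sqCone_corner {n : ℕ} (c : J → Bool → Bool → (Fin n → ℝ)) (r : K → (Fin n → ℝ))
    (j : J) (f f' : Bool) : (c j false f + c j true f', (1 : ℝ)) ∈ sqCone c r :=
  ⟨sqCorner K j f f', sqCorner_nonneg j f f', sqA_corner j f f', sqπ_corner c r j f f'⟩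

lemma sqCone_ray {n : ℕ} (c : J → Bool → Bool → (Fin n → ℝ)) (r : K → (Fin n → ℝ)) (k : K) :
    (r k, (0 : ℝ)) ∈ sqCone c r :=
  ⟨Pi.single (.inr k) 1, fun i => by rw [Pi.single_apply]; split_ifs <;> simp,
    by rw [sqA_single_inr]; simp, by rw [sqπ_single]; rfl⟩

end squares

/-! ### The backward direction -/

lemma poly_seg {p q n : Type*} [Fintype n] {A : Matrix p n ℝ} {b : p → ℝ}
    {B : Matrix q n ℝ} {d : q → ℝ} {x y : n → ℝ} (hx : x ∈ polySet A b B d)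
    (hy : y ∈ polySet A b B d) : (1 / 2 : ℝ) • (x + y) ∈ polySet A b B d := by
  refine ⟨?_, fun i => ?_⟩
  · rw [Matrix.mulVec_smul, Matrix.mulVec_add, hx.1, hy.1]
    ext i
    simp only [Pi.smul_apply, Pi.add_apply, smul_eq_mul]
    ring
  · rw [Matrix.mulVec_smul, Matrix.mulVec_add]
    have := hx.2 i
    have := hy.2 i
    simp only [Pi.smul_apply, Pi.add_apply, smul_eq_mul]
    linarith

/-- The sign attached to a Boolean. -/
def bsgn (f : Bool) : ℝ := if f then -1 else 1

lemma backward {n pP qP : ℕ} {A : Matrix (Fin pP) (Fin n) ℝ} {b : Fin pP → ℝ}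
    {B : Matrix (Fin qP) (Fin n) ℝ} {d : Fin qP → ℝ} {x₀ : Fin n → ℝ}
    (hx₀ : x₀ ∈ polySet A b B d) (hpt : PointedSet (polySet A b B d))
    (H : RHS A B (polySet A b B d)) {g : Fin n → ℝ} (hg : g ∈ circuits A B) :
    IsEdgeDirection (polySet A b B d) g := by
  classical
  by_contra hne
  have hg0 : g ≠ 0 := hg.2.1
  obtain ⟨v, r, hv, hr, hgen⟩ := minkowski hx₀ hpt
  -- a projection along `g`
  obtain ⟨τ, hτ⟩ : ∃ τ : (Fin n → ℝ) →ₗ[ℝ] ℝ, τ g = 1 := by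
    obtain ⟨i, hi⟩ := Function.ne_iff.1 hg0
    exact ⟨(g i)⁻¹ • LinearMap.proj i, by simpa using inv_mul_cancel₀ hi⟩
  set ρ : (Fin n → ℝ) →ₗ[ℝ] (Fin n → ℝ) := LinearMap.id - τ.smulRight g with hρ
  have hρx : ∀ x, x = ρ x + τ x • g := by intro x; simp [hρ]
  have hρg : ρ g = 0 := by simp [hρ, hτ]
  have hρρ : ∀ x, ρ (ρ x) = ρ x := by
    intro x
    conv_rhs => rw [hρx x]
    rw [map_add, map_smul, hρg]; simp
  -- rays are not parallel to `g`
  have n1 : ∀ σ (t : ℝ), t • r σ ≠ g := by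
    intro σ t ht
    apply hne
    rcases le_or_gt 0 t with h | h
    · apply recession_edge hx₀ hpt hg
      intro i
      rw [← ht, Matrix.mulVec_smul]
      exact mul_nonpos_of_nonneg_of_nonpos h ((hr σ).2 i)
    · have hg' : -g ∈ circuits A B := by
        rw [mem_circuits_iff] at hg ⊢
        simpa using hg.smul (c := -1) (by norm_num)
      have := recession_edge hx₀ hpt hg' (by
        intro i
        rw [← ht, ← neg_smul, Matrix.mulVec_smul]
        exact mul_nonpos_of_nonneg_of_nonpos (by linarith) ((hr σ).2 i))
      obtain ⟨_, F, hF, hgF⟩ := this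
      exact ⟨hg0, F, hF, by simpa using hgF⟩
  -- classes modulo `g`
  let J := Set.range (fun σ => ρ (v σ))
  haveI : Fintype J := Fintype.ofFinite _
  haveI : Nonempty J := ⟨⟨_, ∅, rfl⟩⟩
  have hρJ : ∀ z : J, ρ z = z := by
    rintro ⟨_, σ, rfl⟩
    exact hρρ _
  have hseg : ∀ z : J, ∃ lo hi : ℝ, lo ≤ hi ∧ (z : Fin n → ℝ) + lo • g ∈ polySet A b B d ∧
      (z : Fin n → ℝ) + hi • g ∈ polySet A b B d ∧
      ∀ σ, ρ (v σ) = z → lo ≤ τ (v σ) ∧ τ (v σ) ≤ hi := by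
    rintro ⟨z, σ₀, hσ₀⟩
    simp only at hσ₀
    have hne : (Finset.univ.filter fun σ => ρ (v σ) = z).Nonempty := ⟨σ₀, by simpa using hσ₀⟩
    obtain ⟨σ1, h1, hmin⟩ := Finset.exists_min_image _ (fun σ => τ (v σ)) hne
    obtain ⟨σ2, h2, hmax⟩ := Finset.exists_max_image _ (fun σ => τ (v σ)) hne
    simp only [Finset.mem_filter, Finset.mem_univ, true_and] at h1 h2 hmin hmax
    refine ⟨τ (v σ1), τ (v σ2), hmin _ h2, ?_, ?_, fun σ hσ => ⟨hmin σ hσ, hmax σ hσ⟩⟩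
    · simp only
      rw [← h1, ← hρx]; exact hv _
    · simp only
      rw [← h2, ← hρx]; exact hv _
  choose lo hi hlohi hlo hhi hcov using hseg
  let m : J → (Fin n → ℝ) := fun z => (z : Fin n → ℝ) + ((lo z + hi z) / 2) • g
  let h : J → (Fin n → ℝ) := fun z => ((hi z - lo z) / 2) • g
  have hmp : ∀ z, m z + h z = (z : Fin n → ℝ) + hi z • g := by
    intro z
    simp only [m, h]
    module
  have hmm : ∀ z, m z - h z = (z : Fin n → ℝ) + lo z • g := by
    intro z
    simp only [m, h]
    module
  have hu : ∀ z : J, ∃ u : Fin n → ℝ, ((h z = 0 ∧ u = 0) ∨ ρ u ≠ 0) ∧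
      ∀ᶠ ε : ℝ in nhdsWithin 0 (Set.Ioi 0),
        m z + ε • u ∈ polySet A b B d ∧ m z - ε • u ∈ polySet A b B d := by
    intro z
    rcases (hlohi z).eq_or_lt with heq | hlt
    · have h0 : h z = 0 := by simp [h, heq]
      refine ⟨0, Or.inl ⟨h0, rfl⟩, ?_⟩
      have : m z ∈ polySet A b B d := by
        have := hhi z
        rwa [← hmp, h0, add_zero] at this
      simp [this]
    · obtain ⟨u, hu1, hu2⟩ := exists_transversal (x := m z) (g := g) (δ := (hi z - lo z) / 2)
        (by linarith) hg0 (A := A) (b := b) (B := B) (d := d)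
        (by have := hhi z; rwa [← hmp] at this) (by have := hlo z; rwa [← hmm] at this) hne
      refine ⟨u, Or.inr fun h0 => ?_, hu2⟩
      apply hu1 (τ u)
      conv_lhs => rw [hρx u, h0, zero_add]
  choose u hu0 huP using hu
  have hsep : ∀ᶠ ε : ℝ in nhdsWithin 0 (Set.Ioi 0), ∀ (j i : J) (f f' k k' : Bool), j ≠ i →
      ((j : Fin n → ℝ) - i) + ε • (((bsgn f - bsgn f') / 2) • ρ (u j)
        - ((bsgn k - bsgn k') / 2) • ρ (u i)) ≠ 0 := by
    simp only [Filter.eventually_all]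
    intro j i f f' k k' hji
    apply Filter.Eventually.filter_mono nhdsWithin_le_nhds
    have c1 : Filter.Tendsto (fun ε : ℝ => ((j : Fin n → ℝ) - i) +
        ε • (((bsgn f - bsgn f') / 2) • ρ (u j) - ((bsgn k - bsgn k') / 2) • ρ (u i))) (nhds 0)
        (nhds (((j : Fin n → ℝ) - i) +
        (0 : ℝ) • (((bsgn f - bsgn f') / 2) • ρ (u j) - ((bsgn k - bsgn k') / 2) • ρ (u i)))) := by
      apply Continuous.tendsto; fun_prop
    refine c1.eventually_ne ?_
    rw [zero_smul, add_zero, sub_ne_zero]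
    exact fun h => hji (Subtype.ext h)
  obtain ⟨ε, ⟨hεP, hεs⟩, hε⟩ := (((Filter.eventually_all.2 huP).and hsep).and
    (self_mem_nhdsWithin : ∀ᶠ ε : ℝ in nhdsWithin 0 (Set.Ioi 0), ε ∈ Set.Ioi 0)).exists
  have hε0 : ε ≠ 0 := ne_of_gt hε
  let c : J → Bool → Bool → (Fin n → ℝ) := fun j e f =>
    (1 / 2 : ℝ) • (m j + bsgn f • (h j + bsgn e • ε • u j))
  have hcorner : ∀ j f f', c j false f + c j true f' =
      m j + ((bsgn f + bsgn f') / 2) • h j + ((bsgn f - bsgn f') / 2) • ε • u j := by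
    intro j f f'
    simp only [c]
    have e1 : bsgn false = 1 := rfl
    have e2 : bsgn true = -1 := rfl
    rw [e1, e2]
    module
  have hρm : ∀ j, ρ (m j) = j := by
    intro j
    simp only [m]
    rw [map_add, map_smul, hρg, hρJ]; simp
  have hρh : ∀ j, ρ (h j) = 0 := by
    intro j
    simp only [h]
    rw [map_smul, hρg]; simp
  refine square_join H hg c r ?_ hr ?_ n1 ?_ ?_
  · intro j f f'
    rw [hcorner]
    have p1 := hhi j
    have p2 := hlo j
    rw [← hmp] at p1
    rw [← hmm] at p2
    have p3 := hεP j
    cases f <;> cases f' <;> simp [bsgn] <;> norm_num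
    · exact p1
    · exact p3.1
    · simpa [sub_eq_add_neg] using p3.2
    · simpa [sub_eq_add_neg] using p2
  · intro x hx
    refine hgen (sqCone c r) (fun σ t ht => sqCone_smul c r ?_ ht)
      (fun σ t ht => sqCone_smul c r (sqCone_ray c r σ) ht) x hx
    -- a generator on its segment
    let j : J := ⟨ρ (v σ), σ, rfl⟩
    obtain ⟨a1, a2⟩ := hcov j σ rfl
    have q1 := sqCone_corner c r j false false
    have q2 := sqCone_corner c r j true true
    rw [hcorner] at q1 q2
    simp only [bsgn] at q1 q2
    norm_num at q1 q2
    rw [hmp] at q1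
    have q2' : (j : Fin n → ℝ) + lo j • g = m j + -h j := by rw [← hmm, sub_eq_add_neg]
    rw [← q2'] at q2
    rcases (hlohi j).eq_or_lt with heq | hlt
    · have : v σ = (j : Fin n → ℝ) + hi j • g := by
        have : τ (v σ) = hi j := by linarith
        rw [← this]; exact hρx _
      rw [this]; exact q1
    · have hD : 0 < hi j - lo j := by linarith
      have := add_mem
        (sqCone_smul c r q1 (t := (τ (v σ) - lo j) / (hi j - lo j))
          (div_nonneg (by linarith) hD.le))
        (sqCone_smul c r q2 (t := (hi j - τ (v σ)) / (hi j - lo j))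
          (div_nonneg (by linarith) hD.le))
      convert this using 1
      have hs : (τ (v σ) - lo j) / (hi j - lo j) + (hi j - τ (v σ)) / (hi j - lo j) = 1 := by
        field_simp; ring
      have hs2 : (τ (v σ) - lo j) / (hi j - lo j) * hi j +
          (hi j - τ (v σ)) / (hi j - lo j) * lo j = τ (v σ) := by
        field_simp; ring
      ext1
      · show v σ = _ • _ + _ • _
        rw [smul_add, smul_add, smul_smul, smul_smul, add_add_add_comm, ← add_smul, ← add_smul,
          hs, hs2, one_smul]
        exact hρx _
      · show (1 : ℝ) = _ • _ + _ • _
        simp only [smul_eq_mul, mul_one, hs]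
  · intro j e t ht
    have e1 : c j e false - c j e true = h j + bsgn e • ε • u j := by
      simp only [c]
      have e1 : bsgn false = 1 := rfl
      have e2 : bsgn true = -1 := rfl
      rw [e1, e2]
      module
    rw [e1] at ht
    rcases hu0 j with ⟨h1, h2⟩ | h1
    · rw [h1, h2] at ht
      simp at ht
      exact hg0 ht.symm
    · have h2 := congrArg ρ ht
      rw [map_smul, map_add, hρh, map_smul, map_smul, hρg, zero_add] at h2
      have h3 : bsgn e ≠ 0 := by cases e <;> simp [bsgn]
      have h4 : t = 0 := by
        by_contra h4
        exact (smul_ne_zero h4 (smul_ne_zero h3 (smul_ne_zero hε0 h1))) h2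
      rw [h4, zero_smul] at ht
      exact hg0 ht.symm
  · intro j i hji f f' k k' t ht
    have h2 := congrArg ρ ht
    rw [hcorner, hcorner, map_smul, hρg] at h2
    have h3 := hεs j i f f' k k' hji
    have h4 : ρ (m j + ((bsgn f + bsgn f') / 2) • h j + ((bsgn f - bsgn f') / 2) • ε • u j -
        (m i + ((bsgn k + bsgn k') / 2) • h i + ((bsgn k - bsgn k') / 2) • ε • u i)) =
        ((j : Fin n → ℝ) - i) + ε • (((bsgn f - bsgn f') / 2) • ρ (u j)
        - ((bsgn k - bsgn k') / 2) • ρ (u i)) := by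
      simp only [map_sub, map_add, map_smul, hρm, hρh]
      module
    rw [h4] at h2
    have h5 : t = 0 := by
      by_contra h5
      exact smul_ne_zero h5 h3 h2
    rw [h5, zero_smul] at ht
    exact hg0 ht.symm

lemma backward_empty {n pP qP : ℕ} {A : Matrix (Fin pP) (Fin n) ℝ}
    {B : Matrix (Fin qP) (Fin n) ℝ} {P : Set (Fin n → ℝ)} (hP : P = ∅)
    (H : RHS A B P) {g : Fin n → ℝ} (hg : g ∈ circuits A B) : False := by
  have hne : ∀ x : Fin 0 → ℝ, ¬ ((0 : Matrix (Fin 1) (Fin 0) ℝ) *ᵥ x = fun _ => 1) := by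
    intro x hx
    simpa using congrFun hx 0
  obtain ⟨x, hx, _⟩ := H 0 1 0 0 (fun _ => 1) 0 0 ∅ 0 (fun x v h => absurd (h 0) (by simp))
    ⟨by
      ext x
      simp only [Set.mem_empty_iff_false, false_iff]
      exact fun h => hne x h.1, by
      ext x
      simp only [AffineSubspace.span_empty, AffineSubspace.bot_coe, Set.mem_empty_iff_false,
        iff_false]
      exact hne x, fun i => i.elim0⟩ (by simp [hP]) hg
  exact hx.2.1 (Subsingleton.elim _ _)

/-- For a pointed polyhedron `P` with an irredundant description, every circuit
of `P` is an edge direction of `P` iff `C(P) ⊆ π(C(Q))` for every pointed polyhedron `Q` with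
an irredundant description and every linear `π` with `π(Q) = P`. -/
theorem stmt_16 {n pP qP : ℕ}
    (AP : Matrix (Fin pP) (Fin n) ℝ) (bP : Fin pP → ℝ)
    (BP : Matrix (Fin qP) (Fin n) ℝ) (dP : Fin qP → ℝ)
    (P : Set (Fin n → ℝ)) (hPirr : Irredundant AP bP BP dP P)
    (hPpt : PointedSet P) :
    (∀ g ∈ circuits AP BP, IsEdgeDirection P g) ↔
      (∀ (m pQ qQ : ℕ)
        (AQ : Matrix (Fin pQ) (Fin m) ℝ) (bQ : Fin pQ → ℝ)
        (BQ : Matrix (Fin qQ) (Fin m) ℝ) (dQ : Fin qQ → ℝ)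
        (Q : Set (Fin m → ℝ)) (π : (Fin m → ℝ) →ₗ[ℝ] (Fin n → ℝ)),
        PointedSet Q → Irredundant AQ bQ BQ dQ Q → (fun x => π x) '' Q = P →
        circuits AP BP ⊆ (fun x => π x) '' circuits AQ BQ) := by
  obtain ⟨hP, -, -⟩ := hPirr
  constructor
  · intro h m pQ qQ AQ bQ BQ dQ Q π hQpt hQirr hπ g hg
    obtain ⟨rfl, -, -⟩ := hQirr
    exact forward_dir (h g hg) AQ bQ BQ dQ π hQpt hπ
  · intro H g hg
    rcases P.eq_empty_or_nonempty with h | ⟨x₀, hx₀⟩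
    · exact (backward_empty h H hg).elim
    · subst hP
      exact backward hx₀ hPpt H hg
end
end

section
/- Let P ⊂ ℝⁿ be a pointed polyhedron and let g ∈ ℝⁿ \ {0}. Then g is an edge direction of P if and only if for every m ∈ ℕ, every pointed polyhedron Q ⊆ ℝᵐ equipped with an irredundant description, and every linear map π : ℝᵐ → ℝⁿ with π(Q) = P, one has g ∈ π(C(Q)). -/
open Matrix

noncomputable section

/-- The description has trivial lineality space. -/
def PDesc {p q n : Type*} [Fintype n] (A : Matrix p n ℝ) (B : Matrix q n ℝ) : Prop :=
  ∀ k : n → ℝ, A.mulVec k = 0 → B.mulVec k = 0 → k = 0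

/-- sign conformality -/
def SC {q : Type*} (a c : q → ℝ) : Prop := ∀ i, 0 ≤ a i * c i ∧ (c i = 0 → a i = 0)

section aux
variable {p q n : Type*} [Fintype n] {A : Matrix p n ℝ} {b : p → ℝ} {B : Matrix q n ℝ} {d : q → ℝ}

lemma pdesc_of_pointed (hP : PointedSet (polySet A b B d)) (hne : (polySet A b B d).Nonempty) :
    PDesc A B := by
  obtain ⟨x, hx1, hx2⟩ := hne
  intro k h1 h2
  apply hP x k
  intro t
  refine ⟨?_, ?_⟩
  · rw [mulVec_add, mulVec_smul, h1, hx1]; simp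
  · rw [mulVec_add, mulVec_smul, h2]; simpa using hx2

lemma circuits_smul {z : n → ℝ} (hz : z ∈ circuits A B) {c : ℝ} (hc : c ≠ 0) :
    c • z ∈ circuits A B := by
  obtain ⟨h1, h2, h3⟩ := hz
  have e : {i | B.mulVec (c • z) i ≠ 0} = {i | B.mulVec z i ≠ 0} := by
    ext i; simp [mulVec_smul, hc]
  refine ⟨by rw [mulVec_smul, h1, smul_zero], smul_ne_zero hc h2, ?_⟩
  rw [e]; exact h3

lemma circuit_parallel (hpd : PDesc A B) {z y : n → ℝ} (hz : z ∈ circuits A B)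
    (hy : A.mulVec y = 0) (hy0 : y ≠ 0) (hs : ∀ i, B.mulVec z i = 0 → B.mulVec y i = 0) :
    ∃ c : ℝ, z = c • y := by
  have hB : ∃ i, B.mulVec y i ≠ 0 := by
    by_contra! h
    exact hy0 (hpd y hy (funext h))
  obtain ⟨i, hi⟩ := hB
  refine ⟨B.mulVec z i / B.mulVec y i, ?_⟩
  set c := B.mulVec z i / B.mulVec y i with hc
  by_contra hne
  have hw : z - c • y ≠ 0 := sub_ne_zero.mpr hne
  have hA : A.mulVec (z - c • y) = 0 := by
    rw [mulVec_sub, mulVec_smul, hy, hz.1]; simp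
  have hBw : ∀ j, B.mulVec (z - c • y) j = B.mulVec z j - c * B.mulVec y j := by
    intro j; rw [mulVec_sub, mulVec_smul]; simp
  have := hz.2.2 _ hA hw (by
    intro j hj hj'
    apply hj
    rw [hBw, hj', hs j hj']; simp)
  have hzi : B.mulVec z i ≠ 0 := fun h => hi (hs i h)
  have h2 := this (show i ∈ {i | B.mulVec z i ≠ 0} from hzi)
  apply h2
  rw [hBw, hc]; field_simp; ring

lemma SC.trans {a c e : q → ℝ} (h1 : SC a c) (h2 : SC c e) : SC a e := by
  intro i
  obtain ⟨p1, p2⟩ := h1 i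
  obtain ⟨q1, q2⟩ := h2 i
  refine ⟨?_, fun h => p2 (q2 h)⟩
  by_cases hc : c i = 0
  · rw [p2 hc]; simp
  · have : 0 < c i * c i := mul_self_pos.mpr hc
    by_contra! hlt
    nlinarith [mul_nonneg p1 q1]

variable [Fintype q]

lemma reduction {a y : q → ℝ} (h0 : ∀ i, a i = 0 → y i = 0) (h1 : ∃ i, 0 < y i * a i) :
    ∃ t : ℝ, 0 < t ∧ SC (a - t • y) a ∧ ∃ i, a i ≠ 0 ∧ a i - t * y i = 0 := by
  classical
  obtain ⟨i0, hi0⟩ := h1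
  obtain ⟨i, hi, hmin⟩ := Finset.exists_min_image (Finset.univ.filter (fun i => 0 < y i * a i))
    (fun i => a i / y i) ⟨i0, by simpa using hi0⟩
  simp only [Finset.mem_filter, Finset.mem_univ, true_and] at hi hmin
  have hyi : y i ≠ 0 := by rintro h; simp [h] at hi
  have hai : a i ≠ 0 := by rintro h; simp [h] at hi
  have ht : 0 < a i / y i := by
    have : a i / y i = (y i * a i) / (y i * y i) := by field_simp
    rw [this]; exact div_pos hi (mul_self_pos.mpr hyi)
  refine ⟨a i / y i, ht, ?_, i, hai, by field_simp; ring⟩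
  intro j
  refine ⟨?_, fun h => by simp [h, h0 j h]⟩
  simp only [Pi.sub_apply, Pi.smul_apply, smul_eq_mul]
  set t := a i / y i
  by_cases hj : 0 < y j * a j
  · have h2 := hmin j hj
    have hyj : y j ≠ 0 := by rintro h; simp [h] at hj
    have : a j / y j * (y j * a j) = a j * a j := by field_simp
    nlinarith [mul_le_mul_of_nonneg_right h2 hj.le]
  · nlinarith [mul_self_nonneg (a j), mul_nonneg ht.le (sub_nonneg.mpr (not_lt.mp hj))]

/-- number of nonzero entries -/
def supc (a : q → ℝ) : ℕ := by classical exact (Finset.univ.filter (fun i => a i ≠ 0)).card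

lemma supc_lt {a c : q → ℝ} (h : ∀ i, c i = 0 → a i = 0) (h2 : ∃ i, c i ≠ 0 ∧ a i = 0) :
    supc a < supc c := by
  classical
  unfold supc
  apply Finset.card_lt_card
  rw [Finset.ssubset_iff_of_subset]
  · obtain ⟨i, h3, h4⟩ := h2
    exact ⟨i, by simpa using h3, by simpa using h4⟩
  · intro i; simp only [Finset.mem_filter, Finset.mem_univ, true_and]
    exact fun h3 h4 => h3 (h i h4)

lemma exists_conformal_s17 (hpd : PDesc A B) : ∀ (N : ℕ) (u : n → ℝ), supc (B.mulVec u) = N →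
    A.mulVec u = 0 → u ≠ 0 → ∃ h ∈ circuits A B, SC (B.mulVec h) (B.mulVec u) := by
  intro N
  induction N using Nat.strong_induction_on with
  | _ N ih =>
  intro u hN hu hu0
  by_cases hc : u ∈ circuits A B
  · exact ⟨u, hc, fun i => ⟨mul_self_nonneg _, id⟩⟩
  have : ∃ y : n → ℝ, A.mulVec y = 0 ∧ y ≠ 0 ∧ (∀ i, B.mulVec u i = 0 → B.mulVec y i = 0) ∧
      ∃ i, B.mulVec u i ≠ 0 ∧ B.mulVec y i = 0 := by
    by_contra! hcon
    apply hc
    refine ⟨hu, hu0, fun y h1 h2 h3 i hi => ?_⟩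
    refine hcon y h1 h2 (fun j hj => ?_) i hi
    by_contra h4
    exact h3 (show j ∈ {i | B.mulVec y i ≠ 0} from h4) hj
  obtain ⟨y, hy, hy0, hys, i0, hi0, hi0'⟩ := this
  have : ∃ y : n → ℝ, A.mulVec y = 0 ∧ (∀ i, B.mulVec u i = 0 → B.mulVec y i = 0) ∧
      (∃ i, B.mulVec u i ≠ 0 ∧ B.mulVec y i = 0) ∧ ∃ i, 0 < B.mulVec y i * B.mulVec u i := by
    have : ∃ i, B.mulVec y i ≠ 0 := by
      by_contra! h
      exact hy0 (hpd y hy (funext h))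
    obtain ⟨i, hi⟩ := this
    have hui : B.mulVec u i ≠ 0 := fun h => hi (hys i h)
    rcases lt_or_gt_of_ne (mul_ne_zero hi hui) with h | h
    · refine ⟨-y, by rw [mulVec_neg, hy, neg_zero], ?_, ⟨i0, hi0, ?_⟩, i, ?_⟩
      · intro j hj; rw [mulVec_neg]; simp [hys j hj]
      · rw [mulVec_neg]; simp [hi0']
      · rw [mulVec_neg]; simp only [Pi.neg_apply]; linarith
    · exact ⟨y, hy, hys, ⟨i0, hi0, hi0'⟩, i, h⟩
  obtain ⟨y, hy, hys, ⟨i0, hi0, hi0'⟩, hpos⟩ := this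
  obtain ⟨t, ht, hsc, i1, hi1, hi1'⟩ := reduction hys hpos
  have e : B.mulVec (u - t • y) = B.mulVec u - t • B.mulVec y := by
    rw [mulVec_sub, mulVec_smul]
  obtain ⟨h, hh, hsch⟩ := ih _ (by
      rw [← hN]
      exact supc_lt (a := B.mulVec (u - t • y)) (fun i hi => by rw [e]; exact (hsc i).2 hi)
        ⟨i1, hi1, by rw [e]; simpa using hi1'⟩) (u - t • y) rfl
      (by rw [mulVec_sub, mulVec_smul, hu, hy]; simp)
      (by
        intro h0
        have : B.mulVec (u - t • y) i0 = 0 := by rw [h0]; simp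
        rw [e] at this
        simp [hi0'] at this
        exact hi0 this)
  refine ⟨h, hh, hsch.trans (by rw [e]; exact hsc)⟩

lemma pos_of_SC (hpd : PDesc A B) {h u : n → ℝ} (hh : h ∈ circuits A B)
    (hsc : SC (B.mulVec h) (B.mulVec u)) : ∃ i, 0 < B.mulVec h i * B.mulVec u i := by
  have : ∃ i, B.mulVec h i ≠ 0 := by
    by_contra! h'
    exact hh.2.1 (hpd h hh.1 (funext h'))
  obtain ⟨i, hi⟩ := this
  exact ⟨i, lt_of_le_of_ne (hsc i).1
    (mul_ne_zero hi (fun h' => hi ((hsc i).2 h'))).symm⟩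

lemma conformal_ind (hpd : PDesc A B) (C : Set (n → ℝ)) (h0 : (0 : n → ℝ) ∈ C) :
    ∀ (N : ℕ) (u : n → ℝ), supc (B.mulVec u) = N → A.mulVec u = 0 →
    (∀ x ∈ C, ∀ h ∈ circuits A B, SC (B.mulVec h) (B.mulVec u) →
      ∀ t : ℝ, 0 ≤ t → x + t • h ∈ C) → u ∈ C := by
  intro N
  induction N using Nat.strong_induction_on with
  | _ N ih =>
  intro u hN hu hC
  by_cases hu0 : u = 0
  · rwa [hu0]
  obtain ⟨h, hh, hsch⟩ := exists_conformal_s17 hpd _ u rfl hu hu0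
  obtain ⟨t, ht, hsc, i1, hi1, hi1'⟩ := reduction (fun i => (hsch i).2) (pos_of_SC hpd hh hsch)
  have e : B.mulVec (u - t • h) = B.mulVec u - t • B.mulVec h := by
    rw [mulVec_sub, mulVec_smul]
  have hsc' : SC (B.mulVec (u - t • h)) (B.mulVec u) := by rw [e]; exact hsc
  have := ih _ (by
      rw [← hN]
      exact supc_lt (a := B.mulVec (u - t • h)) (fun i hi => (hsc' i).2 hi)
        ⟨i1, hi1, by rw [e]; simpa using hi1'⟩) (u - t • h) rfl
      (by rw [mulVec_sub, mulVec_smul, hu, hh.1]; simp)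
      (fun x hx h' hh' hs t' ht' => hC x hx h' hh' (hs.trans hsc') t' ht')
  have := hC _ this h hh hsch t ht.le
  simpa using this

lemma face_sum {P F : Set (n → ℝ)} (hF : IsFace P F) {x y x' y' : n → ℝ} (hx : x ∈ F) (hy : y ∈ F)
    (hx' : x' ∈ P) (hy' : y' ∈ P) (he : x' + y' = x + y) : x' ∈ F := by
  rcases hF with rfl | ⟨c, s, h1, -, rfl⟩
  · exact hx'
  · refine ⟨hx', ?_⟩
    have e1 := hx.2
    have e2 := hy.2
    have e3 := h1 _ hx'
    have e4 := h1 _ hy'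
    have : c ⬝ᵥ x' + c ⬝ᵥ y' = c ⬝ᵥ x + c ⬝ᵥ y := by rw [← dotProduct_add, ← dotProduct_add, he]
    linarith

/-- The forward direction. -/
lemma forward {n' : Type*} [Fintype n'] {P : Set (n' → ℝ)} {g : n' → ℝ}
    (hg : IsEdgeDirection P g) (π : (n → ℝ) →ₗ[ℝ] (n' → ℝ))
    (hpt : PointedSet (polySet A b B d)) (him : (fun x => π x) '' (polySet A b B d) = P) :
    g ∈ (fun x => π x) '' circuits A B := by
  obtain ⟨hg0, F, ⟨hF, hdim⟩, hgF⟩ := hg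
  have hFP : F ⊆ P := by
    rcases hF with rfl | ⟨c, s, -, -, rfl⟩
    · exact subset_rfl
    · exact fun x hx => hx.1
  have hspan : (affineSpan ℝ F).direction = ℝ ∙ g := by
    symm
    apply Submodule.eq_of_le_of_finrank_eq
    · rwa [Submodule.span_singleton_le_iff_mem]
    · rw [finrank_span_singleton hg0]; exact hdim.symm
  have hxy : ∃ x ∈ F, ∃ y ∈ F, x ≠ y := by
    by_contra! h
    rw [direction_affineSpan, vectorSpan_of_subsingleton] at hgF
    · exact hg0 (by simpa using hgF)
    · exact fun x hx y hy => h x hx y hy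
  obtain ⟨x, hx, y, hy, hne⟩ := hxy
  have hx' := hFP hx
  have hy' := hFP hy
  rw [← him] at hx' hy'
  obtain ⟨X, hX, rfl⟩ := hx'
  obtain ⟨Y, hY, rfl⟩ := hy'
  have hpd := pdesc_of_pointed hpt ⟨X, hX⟩
  simp only at hx hy hne
  have hAu : A.mulVec (X - Y) = 0 := by rw [mulVec_sub, hX.1, hY.1, sub_self]
  have : ∃ h ∈ circuits A B, SC (B.mulVec h) (B.mulVec (X - Y)) ∧ π h ≠ 0 := by
    by_contra! hcon
    have := conformal_ind hpd {w | π w = 0} (by simp) _ (X - Y) rfl hAu (by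
      intro x hx h hh hs t ht
      have e := hcon h hh hs
      simp only [Set.mem_ofPred_eq] at hx ⊢
      rw [map_add, map_smul, hx, e]; simp)
    apply hne
    simpa [sub_eq_zero] using this
  obtain ⟨h, hh, hsc, hπ⟩ := this
  obtain ⟨t, ht, hsc2, -⟩ := reduction (fun i => (hsc i).2) (pos_of_SC hpd hh hsc)
  have key : ∀ i, (0 ≤ t * B.mulVec h i ∧ t * B.mulVec h i ≤ B.mulVec X i - B.mulVec Y i) ∨
      (t * B.mulVec h i ≤ 0 ∧ B.mulVec X i - B.mulVec Y i ≤ t * B.mulVec h i) := by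
    intro i
    have h1 := hsc i
    have h2 := (hsc2 i).1
    rw [mulVec_sub] at h1 h2
    simp only [Pi.sub_apply, Pi.smul_apply, smul_eq_mul] at h1 h2
    obtain ⟨h1, h3⟩ := h1
    rcases lt_trichotomy (B.mulVec X i - B.mulVec Y i) 0 with hl | hl | hl
    · right
      have a1 : B.mulVec h i ≤ 0 := by by_contra! hh; nlinarith
      constructor
      · nlinarith
      · by_contra! hh; nlinarith
    · left; rw [h3 hl, hl]; simp
    · left
      have a1 : 0 ≤ B.mulVec h i := by by_contra! hh; nlinarith
      constructor
      · nlinarith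
      · by_contra! hh; nlinarith
  have m1 : Y + t • h ∈ polySet A b B d := by
    refine ⟨by rw [mulVec_add, mulVec_smul, hh.1, hY.1]; simp, fun i => ?_⟩
    rw [mulVec_add, mulVec_smul]
    simp only [Pi.add_apply, Pi.smul_apply, smul_eq_mul]
    have := hX.2 i
    have := hY.2 i
    rcases key i with k | k <;> linarith [k.1, k.2]
  have m2 : X - t • h ∈ polySet A b B d := by
    refine ⟨by rw [mulVec_sub, mulVec_smul, hh.1, hX.1]; simp, fun i => ?_⟩
    rw [mulVec_sub, mulVec_smul]
    simp only [Pi.sub_apply, Pi.smul_apply, smul_eq_mul]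
    have := hX.2 i
    have := hY.2 i
    rcases key i with k | k <;> linarith [k.1, k.2]
  have m3 : π (Y + t • h) ∈ F := by
    refine face_sum hF (x := π X) (y := π Y) hx hy (y' := π (X - t • h)) ?_ ?_ ?_
    · rw [← him]; exact ⟨_, m1, rfl⟩
    · rw [← him]; exact ⟨_, m2, rfl⟩
    · simp only [map_add, map_sub]; abel
  have m4 : π (Y + t • h) - π Y ∈ (affineSpan ℝ F).direction :=
    AffineSubspace.vsub_mem_direction (subset_affineSpan ℝ F m3) (subset_affineSpan ℝ F hy)
  rw [hspan, Submodule.mem_span_singleton] at m4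
  obtain ⟨c, hc⟩ := m4
  have hc' : t • π h = c • g := by rw [hc]; simp
  have hc0 : c ≠ 0 := by
    rintro rfl
    rw [zero_smul, smul_eq_zero] at hc'
    exact hc'.elim ht.ne' hπ
  refine ⟨(c⁻¹ * t) • h, circuits_smul hh (mul_ne_zero (inv_ne_zero hc0) ht.ne'), ?_⟩
  simp only [map_smul]
  rw [mul_smul, hc', inv_smul_smul₀ hc0]

lemma edge_of_tight (I : Set q) {x y w : n → ℝ} (hx : x ∈ polySet A b B d)
    (hy : y ∈ polySet A b B d) (hxI : ∀ i ∈ I, B.mulVec x i = d i)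
    (hyI : ∀ i ∈ I, B.mulVec y i = d i) (hne : y ≠ x)
    (hk : ∀ k, A.mulVec k = 0 → (∀ i ∈ I, B.mulVec k i = 0) → ∃ c : ℝ, k = c • w) :
    IsEdgeDirection (polySet A b B d) w := by
  classical
  set F : Set (n → ℝ) := {z ∈ polySet A b B d | ∀ i ∈ I, B.mulVec z i = d i} with hF
  obtain ⟨c, hc⟩ := hk (y - x) (by rw [mulVec_sub, hx.1, hy.1, sub_self])
    (fun i hi => by rw [mulVec_sub, Pi.sub_apply, hxI i hi, hyI i hi, sub_self])
  have hc0 : c ≠ 0 := by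
    rintro rfl
    rw [zero_smul, sub_eq_zero] at hc
    exact hne hc
  have hw : w ≠ 0 := by
    rintro rfl
    rw [smul_zero, sub_eq_zero] at hc
    exact hne hc
  have hxF : x ∈ F := ⟨hx, hxI⟩
  have hyF : y ∈ F := ⟨hy, hyI⟩
  have hspan : (affineSpan ℝ F).direction = ℝ ∙ w := by
    apply le_antisymm
    · rw [direction_affineSpan, vectorSpan, Submodule.span_le]
      rintro _ ⟨z1, hz1, z2, hz2, rfl⟩
      obtain ⟨c', hc'⟩ := hk (z1 - z2) (by rw [mulVec_sub, hz1.1.1, hz2.1.1, sub_self])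
        (fun i hi => by rw [mulVec_sub, Pi.sub_apply, hz1.2 i hi, hz2.2 i hi, sub_self])
      exact Submodule.mem_span_singleton.mpr ⟨c', hc'.symm⟩
    · rw [Submodule.span_singleton_le_iff_mem]
      have : y - x ∈ (affineSpan ℝ F).direction :=
        AffineSubspace.vsub_mem_direction (subset_affineSpan ℝ F hyF) (subset_affineSpan ℝ F hxF)
      rw [hc] at this
      exact (Submodule.smul_mem_iff _ hc0).mp this
  refine ⟨hw, F, ⟨Or.inr ?_, ?_⟩, ?_⟩
  · have hval : ∀ z : n → ℝ, (∑ i with i ∈ I, B.row i) ⬝ᵥ z = ∑ i with i ∈ I, B.mulVec z i := by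
      intro z; rw [sum_dotProduct]; rfl
    refine ⟨∑ i with i ∈ I, B.row i, ∑ i with i ∈ I, d i, ?_, ⟨x, hx, ?_⟩, ?_⟩
    · intro z hz
      rw [hval]
      exact Finset.sum_le_sum (fun i _ => hz.2 i)
    · rw [hval]
      exact Finset.sum_congr rfl (fun i hi => hxI i (by simpa using hi))
    · ext z
      constructor
      · rintro ⟨hz, hzI⟩
        refine ⟨hz, ?_⟩
        rw [hval]
        exact Finset.sum_congr rfl (fun i hi => hzI i (by simpa using hi))
      · rintro ⟨hz, hzI⟩
        refine ⟨hz, ?_⟩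
        rw [hval, Finset.sum_eq_sum_iff_of_le (fun i _ => hz.2 i)] at hzI
        exact fun i hi => hzI i (by simpa using hi)
  · unfold spanDim; rw [hspan, finrank_span_singleton hw]
  · rw [hspan]; exact Submodule.mem_span_singleton_self w

/-- number of non-tight rows -/
def ntc (B : Matrix q n ℝ) (d : q → ℝ) (x : n → ℝ) : ℕ := supc (fun i => d i - B.mulVec x i)

/-- Move until a row in `Z` becomes tight, rows outside `Z` ignored. -/
lemma move (Z : Set q) {x k : n → ℝ} (hx : ∀ i ∈ Z, B.mulVec x i ≤ d i)
    (hk : ∀ i ∈ Z, B.mulVec x i = d i → B.mulVec k i = 0) (hpos : ∃ i ∈ Z, 0 < B.mulVec k i) :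
    ∃ t : ℝ, 0 < t ∧ (∀ i ∈ Z, B.mulVec (x + t • k) i ≤ d i) ∧
      (∀ i ∈ Z, B.mulVec x i = d i → B.mulVec (x + t • k) i = d i) ∧
      ∃ i ∈ Z, B.mulVec x i ≠ d i ∧ B.mulVec (x + t • k) i = d i := by
  classical
  obtain ⟨i0, hi0, hi0'⟩ := hpos
  obtain ⟨i, hi, hmin⟩ := Finset.exists_min_image
    (Finset.univ.filter (fun i => i ∈ Z ∧ 0 < B.mulVec k i))
    (fun i => (d i - B.mulVec x i) / B.mulVec k i) ⟨i0, by simpa using ⟨hi0, hi0'⟩⟩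
  simp only [Finset.mem_filter, Finset.mem_univ, true_and] at hi hmin
  have hni : B.mulVec x i ≠ d i := fun h => hi.2.ne' (hk i hi.1 h)
  have hlt : 0 < d i - B.mulVec x i := sub_pos.mpr (lt_of_le_of_ne (hx i hi.1) hni)
  have e : ∀ (t : ℝ) j, B.mulVec (x + t • k) j = B.mulVec x j + t * B.mulVec k j := by
    intro t j; rw [mulVec_add, mulVec_smul]; rfl
  have ht := div_pos hlt hi.2
  refine ⟨(d i - B.mulVec x i) / B.mulVec k i, ht, ?_, ?_, i, hi.1, hni, ?_⟩
  · intro j hj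
    rw [e]
    by_cases hkj : 0 < B.mulVec k j
    · have := hmin j ⟨hj, hkj⟩
      rw [le_div_iff₀ hkj] at this
      linarith
    · have := hx j hj
      nlinarith [mul_nonneg ht.le (sub_nonneg.mpr (not_lt.mp hkj))]
  · intro j hj h
    rw [e, hk j hj h, h]; simp
  · rw [e]
    have := hi.2.ne'
    field_simp; ring

lemma ray_edge (hpd : PDesc A B) (hne : (polySet A b B d).Nonempty) {h : n → ℝ}
    (hh : h ∈ circuits A B) (hneg : ∀ i, B.mulVec h i ≤ 0) :
    IsEdgeDirection (polySet A b B d) h := by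
  classical
  set Z : Set q := {i | B.mulVec h i = 0} with hZ
  let N : (n → ℝ) → ℕ := fun x => supc (fun i => if i ∈ Z then d i - B.mulVec x i else 0)
  obtain ⟨x, hx, hmin⟩ := WellFounded.has_min (measure N).wf _ hne
  have hmin : ∀ y ∈ polySet A b B d, N x ≤ N y := fun y hy => not_lt.mp (hmin y hy)
  have main : ∀ k, A.mulVec k = 0 → (∀ i ∈ {i ∈ Z | B.mulVec x i = d i}, B.mulVec k i = 0) →
      (∃ i ∈ Z, 0 < B.mulVec k i) → False := by
    intro k hk hkI hpos
    obtain ⟨t, ht, t1, t2, i, hiZ, hi1, hi2⟩ := move (d := d) Z (x := x) (k := k) (fun i _ => hx.2 i)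
      (fun i hi h' => hkI i ⟨hi, h'⟩) hpos
    let M : ℝ := ∑ i, |(B.mulVec (x + t • k) i - d i) / (- B.mulVec h i)|
    have hMi : ∀ i, |(B.mulVec (x + t • k) i - d i) / (- B.mulVec h i)| ≤ M := fun i =>
      Finset.single_le_sum (f := fun i => |(B.mulVec (x + t • k) i - d i) / (- B.mulVec h i)|)
        (fun i _ => abs_nonneg _) (Finset.mem_univ i)
    have e : ∀ j, B.mulVec (x + t • k + M • h) j = B.mulVec (x + t • k) j + M * B.mulVec h j := by
      intro j; rw [mulVec_add, mulVec_smul]; rfl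
    have hmem : x + t • k + M • h ∈ polySet A b B d := by
      refine ⟨by rw [mulVec_add, mulVec_add, mulVec_smul, mulVec_smul, hk, hh.1, hx.1]; simp, ?_⟩
      intro j
      rw [e]
      by_cases hj : B.mulVec h j = 0
      · rw [hj]; simpa using t1 j hj
      · have hj' : 0 < - B.mulVec h j := by
          have := lt_of_le_of_ne (hneg j) hj
          linarith
        have := (le_abs_self _).trans (hMi j)
        rw [div_le_iff₀ hj'] at this
        linarith
    have h1 := hmin _ hmem
    have h2 : N (x + t • k + M • h) < N x := by
      apply supc_lt
      · intro j hj
        by_cases hjZ : j ∈ Z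
        · simp only [hjZ, if_true] at hj ⊢
          rw [e, show B.mulVec h j = 0 from hjZ, t2 j hjZ (by linarith)]; simp
        · simp [hjZ]
      · refine ⟨i, ?_, ?_⟩
        · simp only [hiZ, if_true]; exact fun h' => hi1 (by linarith)
        · simp only [hiZ, if_true]
          rw [e, show B.mulVec h i = 0 from hiZ, hi2]; simp
    omega
  refine edge_of_tight {i ∈ Z | B.mulVec x i = d i} (x := x) (y := x + h) hx ?_ (fun i hi => hi.2)
    ?_ ?_ ?_
  · refine ⟨by rw [mulVec_add, hh.1, hx.1, add_zero], fun i => ?_⟩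
    rw [mulVec_add]
    have := hx.2 i
    have := hneg i
    simp only [Pi.add_apply]; linarith
  · intro i hi
    rw [mulVec_add, Pi.add_apply, show B.mulVec h i = 0 from hi.1, hi.2, add_zero]
  · simpa using hh.2.1
  · intro k hk hkI
    by_cases hall : ∀ i ∈ Z, B.mulVec k i = 0
    · by_cases hk0 : k = 0
      · exact ⟨0, by simp [hk0]⟩
      · obtain ⟨c, hc⟩ := circuit_parallel hpd hh hk hk0 hall
        have hc0 : c ≠ 0 := by
          rintro rfl
          exact hh.2.1 (by simpa using hc)
        exact ⟨c⁻¹, by rw [hc, inv_smul_smul₀ hc0]⟩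
    · exfalso
      push Not at hall
      obtain ⟨i, hi, hi'⟩ := hall
      rcases lt_or_gt_of_ne hi' with h' | h'
      · refine main (-k) (by rw [mulVec_neg, hk, neg_zero]) (fun j hj => ?_) ⟨i, hi, ?_⟩
        · rw [mulVec_neg, Pi.neg_apply, hkI j hj, neg_zero]
        · rw [mulVec_neg, Pi.neg_apply]; linarith
      · exact main k hk hkI ⟨i, hi, h'⟩

lemma exists_rays (hpd : PDesc A B) :
    ∃ r : Set q → (n → ℝ),
      (∀ S, r S = 0 ∨ (r S ∈ circuits A B ∧ ∀ i, B.mulVec (r S) i ≤ 0)) ∧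
      ∀ h ∈ circuits A B, (∀ i, B.mulVec h i ≤ 0) → ∃ S, ∃ t : ℝ, 0 ≤ t ∧ h = t • r S := by
  classical
  have : ∀ S : Set q, ∃ r : n → ℝ, (r = 0 ∨ (r ∈ circuits A B ∧ ∀ i, B.mulVec r i ≤ 0)) ∧
      ∀ h ∈ circuits A B, (∀ i, B.mulVec h i ≤ 0) → {i | B.mulVec h i = 0} = S →
        ∃ t : ℝ, 0 ≤ t ∧ h = t • r := by
    intro S
    by_cases hS : ∃ r ∈ circuits A B, (∀ i, B.mulVec r i ≤ 0) ∧ {i | B.mulVec r i = 0} = S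
    · obtain ⟨r, hr, hr2, hr3⟩ := hS
      refine ⟨r, Or.inr ⟨hr, hr2⟩, fun h hh hh2 hh3 => ?_⟩
      obtain ⟨c, hc⟩ := circuit_parallel hpd hh hr.1 hr.2.1 (fun i hi => by
        have : i ∈ {i | B.mulVec h i = 0} := hi
        rw [hh3, ← hr3] at this
        exact this)
      refine ⟨c, ?_, hc⟩
      have : ∃ i, B.mulVec r i ≠ 0 := by
        by_contra! h'
        exact hr.2.1 (hpd r hr.1 (funext h'))
      obtain ⟨i, hi⟩ := this
      have h1 := hh2 i
      rw [hc, mulVec_smul, Pi.smul_apply, smul_eq_mul] at h1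
      have h2 := lt_of_le_of_ne (hr2 i) hi
      by_contra! hlt
      nlinarith
    · exact ⟨0, Or.inl rfl, fun h hh hh2 hh3 => absurd ⟨h, hh, hh2, hh3⟩ hS⟩
  choose r hr1 hr2 using this
  exact ⟨r, hr1, fun h hh hh2 => ⟨_, hr2 _ h hh hh2 rfl⟩⟩

lemma exists_verts (hne : (polySet A b B d).Nonempty) :
    ∃ v : Set q → (n → ℝ), (∀ S, v S ∈ polySet A b B d) ∧
      ∀ x ∈ polySet A b B d, (∀ k, A.mulVec k = 0 → (∀ i, B.mulVec x i = d i → B.mulVec k i = 0) →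
        k = 0) → ∃ S, x = v S := by
  classical
  have : ∀ S : Set q, ∃ v ∈ polySet A b B d,
      ∀ x ∈ polySet A b B d, (∀ k, A.mulVec k = 0 → (∀ i, B.mulVec x i = d i → B.mulVec k i = 0) →
        k = 0) → {i | B.mulVec x i = d i} = S → x = v := by
    intro S
    by_cases hS : ∃ v ∈ polySet A b B d, {i | B.mulVec v i = d i} = S
    · obtain ⟨v, hv, rfl⟩ := hS
      refine ⟨v, hv, fun x hx hx2 hx3 => ?_⟩
      rw [← sub_eq_zero]
      apply hx2
      · rw [mulVec_sub, hx.1, hv.1, sub_self]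
      · intro i hi
        have : i ∈ {i | B.mulVec x i = d i} := hi
        rw [hx3] at this
        rw [mulVec_sub, Pi.sub_apply, hi, show B.mulVec v i = d i from this, sub_self]
    · obtain ⟨v, hv⟩ := hne
      exact ⟨v, hv, fun x hx _ hx3 => absurd ⟨x, hx, hx3⟩ hS⟩
  choose v hv1 hv2 using this
  exact ⟨v, hv1, fun x hx hx2 => ⟨_, hv2 _ x hx hx2 rfl⟩⟩

lemma minkowski_s17 (hpd : PDesc A B) {r v : Set q → (n → ℝ)}
    (hr : ∀ h ∈ circuits A B, (∀ i, B.mulVec h i ≤ 0) → ∃ S, ∃ t : ℝ, 0 ≤ t ∧ h = t • r S)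
    (hv : ∀ x ∈ polySet A b B d,
      (∀ k, A.mulVec k = 0 → (∀ i, B.mulVec x i = d i → B.mulVec k i = 0) → k = 0) → ∃ S, x = v S)
    (T : Set (n → ℝ)) (hT : Convex ℝ T) (hvT : ∀ S, v S ∈ T)
    (hrT : ∀ S, ∀ x ∈ T, ∀ t : ℝ, 0 ≤ t → x + t • r S ∈ T) :
    ∀ (N : ℕ) (x : n → ℝ), ntc B d x = N → x ∈ polySet A b B d → x ∈ T := by
  intro N
  induction N using Nat.strong_induction_on with
  | _ N ih =>
  intro x hN hx
  by_cases hvert : ∀ k, A.mulVec k = 0 → (∀ i, B.mulVec x i = d i → B.mulVec k i = 0) → k = 0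
  · obtain ⟨S, rfl⟩ := hv x hx hvert
    exact hvT S
  push Not at hvert
  obtain ⟨k, hk, hkI, hk0⟩ := hvert
  have step : ∀ k, A.mulVec k = 0 → (∀ i, B.mulVec x i = d i → B.mulVec k i = 0) →
      (∃ i, 0 < B.mulVec k i) → ∃ t : ℝ, 0 < t ∧ x + t • k ∈ T := by
    intro k hk hkI ⟨i, hi⟩
    obtain ⟨t, ht, t1, t2, j, -, hj1, hj2⟩ := move (d := d) Set.univ (x := x) (k := k)
      (fun i _ => hx.2 i) (fun i _ h' => hkI i h') ⟨i, trivial, hi⟩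
    refine ⟨t, ht, ih _ ?_ _ rfl ⟨?_, fun i => t1 i trivial⟩⟩
    · rw [← hN]
      apply supc_lt
      · intro j hj
        rw [t2 j trivial (by linarith), sub_self]
      · exact ⟨j, fun h' => hj1 (by linarith), by rw [hj2, sub_self]⟩
    · rw [mulVec_add, mulVec_smul, hk, hx.1]; simp
  have rec1 : ∀ k, A.mulVec k = 0 → (∀ i, B.mulVec x i = d i → B.mulVec k i = 0) →
      (∃ i, 0 < B.mulVec k i) → (∀ i, 0 ≤ B.mulVec k i) → x ∈ T := by
    intro k hk hkI hpos hnn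
    obtain ⟨t, ht, hy⟩ := step k hk hkI hpos
    have := conformal_ind hpd {w | x + t • k + t • w ∈ T} (by simpa using hy) _ (-k) rfl
      (by rw [mulVec_neg, hk, neg_zero]) (by
        intro w hw h hh hsc s hs
        obtain ⟨S, t', ht', hS⟩ := hr h hh (by
          intro i
          have h1 := hsc i
          rw [mulVec_neg, Pi.neg_apply] at h1
          rcases (hnn i).eq_or_lt with h2 | h2
          · exact (h1.2 (by rw [← h2, neg_zero])).le
          · by_contra! h3; nlinarith [h1.1])
        have := hrT S _ hw (t * s * t') (by positivity)
        simp only [Set.mem_ofPred_eq]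
        convert this using 1
        rw [hS]; module)
    simp only [Set.mem_ofPred_eq] at this
    simpa using this
  have neg1 : A.mulVec (-k) = 0 := by rw [mulVec_neg, hk, neg_zero]
  have neg2 : ∀ i, B.mulVec x i = d i → B.mulVec (-k) i = 0 := by
    intro i hi; rw [mulVec_neg, Pi.neg_apply, hkI i hi, neg_zero]
  by_cases hp : ∃ i, 0 < B.mulVec k i
  · by_cases hn : ∃ i, B.mulVec k i < 0
    · obtain ⟨t1, ht1, m1⟩ := step k hk hkI hp
      obtain ⟨t2, ht2, m2⟩ := step (-k) neg1 neg2 (by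
        obtain ⟨i, hi⟩ := hn
        exact ⟨i, by rw [mulVec_neg, Pi.neg_apply]; linarith⟩)
      have := hT m1 m2 (a := t2 / (t1 + t2)) (b := t1 / (t1 + t2)) (by positivity) (by positivity)
        (by field_simp; ring)
      convert this using 1
      have e1 : t2 / (t1 + t2) + t1 / (t1 + t2) = 1 := by field_simp; ring
      have e2 : t2 / (t1 + t2) * t1 = t1 / (t1 + t2) * t2 := by field_simp
      calc x = (t2 / (t1 + t2) + t1 / (t1 + t2)) • x +
              (t2 / (t1 + t2) * t1 - t1 / (t1 + t2) * t2) • k := by rw [e1, e2]; simp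
        _ = _ := by module
    · push Not at hn
      exact rec1 k hk hkI hp hn
  · push Not at hp
    refine rec1 (-k) neg1 neg2 ?_ ?_
    · by_contra! hcon
      apply hk0
      apply hpd k hk
      funext i
      have h1 := hcon i
      rw [mulVec_neg, Pi.neg_apply] at h1
      exact le_antisymm (hp i) (by simpa using h1)
    · intro i; rw [mulVec_neg, Pi.neg_apply]; linarith [hp i]

lemma pair_lemma {g : n → ℝ} (hg : ¬ IsEdgeDirection (polySet A b B d) g) {u v : n → ℝ}
    (hu : u ∈ polySet A b B d) (hv : v ∈ polySet A b B d) (hne : u ≠ v) :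
    ∃ k : n → ℝ, (¬ ∃ c : ℝ, k = c • g) ∧ A.mulVec k = 0 ∧
      ∀ i, |B.mulVec k i| ≤ d i - B.mulVec ((1 / 2 : ℝ) • (u + v)) i := by
  classical
  set x := (1 / 2 : ℝ) • (u + v) with hxdef
  have e : ∀ i, B.mulVec x i = (B.mulVec u i + B.mulVec v i) / 2 := by
    intro i; rw [hxdef, mulVec_smul, mulVec_add]; simp; ring
  have hx : x ∈ polySet A b B d := by
    refine ⟨?_, fun i => ?_⟩
    · rw [hxdef, mulVec_smul, mulVec_add, hu.1, hv.1]; module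
    · rw [e]; linarith [hu.2 i, hv.2 i]
  have : ∃ k : n → ℝ, A.mulVec k = 0 ∧ (∀ i ∈ {i | B.mulVec x i = d i}, B.mulVec k i = 0) ∧
      ¬ ∃ c : ℝ, k = c • g := by
    by_contra! hcon
    apply hg
    refine edge_of_tight {i | B.mulVec x i = d i} hx hu (fun i hi => hi) ?_ ?_ hcon
    · intro i hi
      have : B.mulVec x i = d i := hi
      rw [e] at this
      linarith [hu.2 i, hv.2 i]
    · intro h
      apply hne
      have h2 : (2 : ℝ) • x = u + v := by rw [hxdef]; module
      rw [← h] at h2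
      have h3 : u + u = u + v := by rw [← h2]; module
      exact add_left_cancel h3
  obtain ⟨k, hk, hkI, hkg⟩ := this
  have : ∃ ε : ℝ, 0 < ε ∧ ∀ i, ε * |B.mulVec k i| ≤ d i - B.mulVec x i := by
    have hev : ∀ᶠ ε : ℝ in nhdsWithin 0 (Set.Ioi 0), ∀ i, ε * |B.mulVec k i| ≤ d i - B.mulVec x i := by
      rw [Filter.eventually_all]
      intro i
      by_cases hi : B.mulVec x i = d i
      · rw [hkI i hi, hi]; simp
      · have hlt : 0 < d i - B.mulVec x i := sub_pos.mpr (lt_of_le_of_ne (hx.2 i) hi)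
        have hc : Filter.Tendsto (fun ε : ℝ => ε * |B.mulVec k i|) (nhds 0) (nhds (0 * |B.mulVec k i|)) :=
          (continuous_id.mul continuous_const).tendsto 0
        rw [zero_mul] at hc
        exact ((hc.eventually_lt_const hlt).filter_mono nhdsWithin_le_nhds).mono fun _ h => h.le
    obtain ⟨ε, h1, h2⟩ := (hev.and self_mem_nhdsWithin).exists
    exact ⟨ε, h2, h1⟩
  obtain ⟨ε, hε, hε2⟩ := this
  refine ⟨ε • k, ?_, by rw [mulVec_smul, hk, smul_zero], fun i => ?_⟩
  · rintro ⟨c, hc⟩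
    exact hkg ⟨ε⁻¹ * c, by rw [mul_smul, ← hc, inv_smul_smul₀ hε.ne']⟩
  · rw [mulVec_smul, Pi.smul_apply, smul_eq_mul, abs_mul, abs_of_pos hε]
    exact hε2 i

end aux

/-- The direction space of a face of a standard form polyhedron. -/
def stdK {p m : Type*} [Fintype m] (A : Matrix p m ℝ) (I : Set m) : Submodule ℝ (m → ℝ) where
  carrier := {w | A.mulVec w = 0 ∧ ∀ i ∈ I, w i = 0}
  add_mem' := by
    rintro x y ⟨h1, h2⟩ ⟨h3, h4⟩
    exact ⟨by rw [mulVec_add, h1, h3, add_zero], fun i hi => by simp [h2 i hi, h4 i hi]⟩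
  zero_mem' := ⟨by simp, by simp⟩
  smul_mem' := by
    rintro c x ⟨h1, h2⟩
    exact ⟨by rw [mulVec_smul, h1, smul_zero], fun i hi => by simp [h2 i hi]⟩

lemma std_dir {p m : Type*} [Fintype m] (A : Matrix p m ℝ) (b : p → ℝ) (I : Set m) (z0 : m → ℝ)
    (h1 : A.mulVec z0 = b) (h2 : ∀ i ∈ I, z0 i = 0) (h3 : ∀ i, i ∉ I → 0 < z0 i) :
    (affineSpan ℝ {z : m → ℝ | A.mulVec z = b ∧ (∀ i, 0 ≤ z i) ∧ ∀ i ∈ I, z i = 0}).direction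
      = stdK A I := by
  set S := {z : m → ℝ | A.mulVec z = b ∧ (∀ i, 0 ≤ z i) ∧ ∀ i ∈ I, z i = 0} with hS
  have hz0 : z0 ∈ S := by
    refine ⟨h1, fun i => ?_, h2⟩
    by_cases hi : i ∈ I
    · exact (h2 i hi).ge
    · exact (h3 i hi).le
  apply le_antisymm
  · rw [direction_affineSpan, vectorSpan, Submodule.span_le]
    rintro _ ⟨x, hx, y, hy, rfl⟩
    refine ⟨?_, fun i hi => ?_⟩
    · simp only [vsub_eq_sub]; rw [mulVec_sub, hx.1, hy.1, sub_self]
    · simp [hx.2.2 i hi, hy.2.2 i hi]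
  · rintro w ⟨hw1, hw2⟩
    have hev : ∀ᶠ ε : ℝ in nhdsWithin 0 (Set.Ioi 0), ∀ i, 0 ≤ z0 i + ε * w i := by
      rw [Filter.eventually_all]
      intro i
      by_cases hi : i ∈ I
      · rw [h2 i hi, hw2 i hi]; simp
      · have hc : Filter.Tendsto (fun ε : ℝ => z0 i + ε * w i) (nhds 0) (nhds (z0 i + 0 * w i)) :=
          (continuous_const.add (continuous_id.mul continuous_const)).tendsto 0
        rw [zero_mul, add_zero] at hc
        exact ((hc.eventually_const_lt (h3 i hi)).filter_mono nhdsWithin_le_nhds).mono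
          fun _ h => h.le
    obtain ⟨ε, he1, he2⟩ := (hev.and self_mem_nhdsWithin).exists
    have hε : (0 : ℝ) < ε := he2
    have hm : z0 + ε • w ∈ S := by
      refine ⟨by rw [mulVec_add, mulVec_smul, hw1, h1]; simp, fun i => ?_, fun i hi => ?_⟩
      · simpa using he1 i
      · simp [h2 i hi, hw2 i hi]
    have : z0 + ε • w - z0 ∈ (affineSpan ℝ S).direction :=
      AffineSubspace.vsub_mem_direction (subset_affineSpan ℝ S hm) (subset_affineSpan ℝ S hz0)
    rw [add_sub_cancel_left] at this
    exact (Submodule.smul_mem_iff _ hε.ne').mp this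

lemma std_irredundant {p m : ℕ} (A : Matrix (Fin p) (Fin m) ℝ) (b : Fin p → ℝ)
    (hpos : ∃ z, A.mulVec z = b ∧ ∀ i, 0 < z i)
    (hf : ∀ i, ∃ z, A.mulVec z = b ∧ z i = 0 ∧ ∀ j, j ≠ i → 0 < z j) :
    Irredundant A b (-1 : Matrix (Fin m) (Fin m) ℝ) 0
      {z | A.mulVec z = b ∧ ∀ i, 0 ≤ z i} := by
  obtain ⟨z0, hz0, hz0p⟩ := hpos
  have hdir : (affineSpan ℝ {z : Fin m → ℝ | A.mulVec z = b ∧ ∀ i, 0 ≤ z i}).direction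
      = stdK A ∅ := by
    rw [← std_dir A b ∅ z0 hz0 (by simp) (fun i _ => hz0p i)]
    simp
  have e : ∀ (z : Fin m → ℝ), (-1 : Matrix (Fin m) (Fin m) ℝ).mulVec z = -z := by
    intro z; rw [neg_mulVec, one_mulVec]
  refine ⟨?_, ?_, ?_⟩
  · ext z
    simp only [polySet, Set.mem_ofPred_eq, e]
    refine and_congr_right fun _ => ?_
    simp [Pi.le_def]
  · ext x
    have hz0m : z0 ∈ affineSpan ℝ {z : Fin m → ℝ | A.mulVec z = b ∧ ∀ i, 0 ≤ z i} :=
      subset_affineSpan _ _ ⟨hz0, fun i => (hz0p i).le⟩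
    rw [SetLike.mem_coe, ← AffineSubspace.vsub_right_mem_direction_iff_mem hz0m, hdir]
    constructor
    · intro hx
      exact ⟨by simp only [vsub_eq_sub]; rw [mulVec_sub, hz0, show A.mulVec x = b from hx, sub_self],
        by simp⟩
    · rintro ⟨hx, -⟩
      simp only [vsub_eq_sub] at hx
      rw [mulVec_sub, hz0, sub_eq_zero] at hx
      exact hx
  · intro i
    obtain ⟨z1, hz1, hz1i, hz1p⟩ := hf i
    have hset : {x ∈ {z : Fin m → ℝ | A.mulVec z = b ∧ ∀ i, 0 ≤ z i} |
        (-1 : Matrix (Fin m) (Fin m) ℝ).mulVec x i = (0 : Fin m → ℝ) i} =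
        {z : Fin m → ℝ | A.mulVec z = b ∧ (∀ i, 0 ≤ z i) ∧ ∀ j ∈ ({i} : Set (Fin m)), z j = 0} := by
      ext z; simp [e, and_assoc]
    have hz1n : ∀ j, 0 ≤ z1 j := by
      intro j
      by_cases hj : j = i
      · rw [hj, hz1i]
      · exact (hz1p j hj).le
    refine ⟨Or.inr ⟨-Pi.single i 1, 0, ?_, ⟨z1, ⟨hz1, hz1n⟩, ?_⟩, ?_⟩, ?_⟩
    · intro y hy
      simpa using hy.2 i
    · simpa using hz1i
    · ext z; simp [e]
    · unfold spanDim
      rw [hset, std_dir A b {i} z1 hz1 (by simpa using hz1i) (by simpa using hz1p), hdir]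
      let f : Module.Dual ℝ (stdK A ∅) := (LinearMap.proj i).comp (stdK A ∅).subtype
      have hf0 : f ≠ 0 := by
        intro hf0
        have hm : z0 - z1 ∈ stdK A ∅ := ⟨by rw [mulVec_sub, hz0, hz1, sub_self], by simp⟩
        have : f ⟨z0 - z1, hm⟩ = 0 := by rw [hf0]; rfl
        have h2 : (z0 - z1) i = 0 := this
        simp [hz1i] at h2
        exact (hz0p i).ne' h2
      have hmap : stdK A {i} = (LinearMap.ker f).map (stdK A ∅).subtype := by
        ext w
        constructor
        · rintro ⟨h1, h2⟩
          exact ⟨⟨w, h1, by simp⟩, h2 i rfl, rfl⟩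
        · rintro ⟨w', h2, rfl⟩
          refine ⟨w'.2.1, ?_⟩
          intro j hj
          rw [Set.mem_singleton_iff.mp hj]
          exact h2
      rw [hmap, Submodule.finrank_map_subtype_eq]
      exact Module.Dual.finrank_ker_add_one_of_ne_zero hf0

lemma std_kill {n : ℕ} {ι R : Type*} [Fintype ι] [Fintype R]
    (P : Set (Fin n → ℝ)) (g : Fin n → ℝ)
    (L : (ι → ℝ) →ₗ[ℝ] (R → ℝ)) (b : R → ℝ) (π : (ι → ℝ) →ₗ[ℝ] (Fin n → ℝ))
    (hpos : ∃ z, L z = b ∧ ∀ i, 0 < z i)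
    (hf : ∀ i, ∃ z, L z = b ∧ z i = 0 ∧ ∀ j, j ≠ i → 0 < z j)
    (him : (fun x => π x) '' {z | L z = b ∧ ∀ i, 0 ≤ z i} = P)
    (hcirc : ∀ z, L z = 0 → z ≠ 0 →
      (∀ y, L y = 0 → y ≠ 0 → (∀ i, z i = 0 → y i = 0) → ∃ c : ℝ, z = c • y) → π z ≠ g) :
    ¬ (∀ (m pQ qQ : ℕ)
        (AQ : Matrix (Fin pQ) (Fin m) ℝ) (bQ : Fin pQ → ℝ)
        (BQ : Matrix (Fin qQ) (Fin m) ℝ) (dQ : Fin qQ → ℝ)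
        (Q : Set (Fin m → ℝ)) (π : (Fin m → ℝ) →ₗ[ℝ] (Fin n → ℝ)),
        PointedSet Q → Irredundant AQ bQ BQ dQ Q → (fun x => π x) '' Q = P →
        g ∈ (fun x => π x) '' circuits AQ BQ) := by
  intro H
  let e := Fintype.equivFin ι
  let f := Fintype.equivFin R
  let E : (Fin (Fintype.card ι) → ℝ) ≃ₗ[ℝ] (ι → ℝ) := LinearEquiv.funCongrLeft ℝ ℝ e
  let G : (R → ℝ) ≃ₗ[ℝ] (Fin (Fintype.card R) → ℝ) := LinearEquiv.funCongrLeft ℝ ℝ f.symm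
  let A := LinearMap.toMatrix' (G.toLinearMap ∘ₗ L ∘ₗ E.toLinearMap)
  have hA : ∀ z, A.mulVec z = G (L (E z)) := fun z => by
    simp only [A]; rw [LinearMap.toMatrix'_mulVec]; rfl
  have hE : ∀ z i, E z i = z (e i) := fun z i => rfl
  have hEs : ∀ z i, E.symm z i = z (e.symm i) := fun z i => rfl
  have hAs : ∀ z, A.mulVec (E.symm z) = G (L z) := fun z => by rw [hA, E.apply_symm_apply]
  have hB : ∀ (z : Fin (Fintype.card ι) → ℝ), (-1 : Matrix _ _ ℝ).mulVec z = -z := by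
    intro z; rw [neg_mulVec, one_mulVec]
  have := H (Fintype.card ι) (Fintype.card R) (Fintype.card ι) A (G b) (-1) 0
    {z | A.mulVec z = G b ∧ ∀ i, 0 ≤ z i} (π ∘ₗ E.toLinearMap) ?_ ?_ ?_
  · obtain ⟨z, hz, hzg⟩ := this
    refine hcirc (E z) ?_ ?_ ?_ hzg
    · have := hz.1
      rw [hA] at this
      simpa using this
    · simpa using hz.2.1
    · intro y hy hy0 hs
      obtain ⟨c, hc⟩ := circuit_parallel (A := A) (B := -1)
        (fun k _ hk => by rw [hB] at hk; simpa using hk) hz (y := E.symm y)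
        (by rw [hAs, hy, map_zero]) (by simpa using hy0) (by
          intro i hi
          rw [hB] at hi ⊢
          simp only [Pi.neg_apply, neg_eq_zero] at hi ⊢
          rw [hEs]
          apply hs
          rw [hE]; simpa using hi)
      exact ⟨c, by rw [hc, map_smul, E.apply_symm_apply]⟩
  · intro x v h
    funext i
    by_contra hv
    have h1 := (h (-(x i + 1) / v i)).2 i
    have hv' : v i ≠ 0 := hv
    simp only [Pi.add_apply, Pi.smul_apply, smul_eq_mul] at h1
    rw [div_mul_cancel₀ _ hv'] at h1
    linarith
  · apply std_irredundant
    · obtain ⟨z, h1, h2⟩ := hpos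
      exact ⟨E.symm z, by rw [hAs, h1], fun i => h2 _⟩
    · intro i
      obtain ⟨z, h1, h2, h3⟩ := hf (e.symm i)
      refine ⟨E.symm z, by rw [hAs, h1], h2, fun j hj => h3 _ ?_⟩
      exact fun h => hj (e.symm.injective h)
  · rw [← him]
    ext x
    constructor
    · rintro ⟨z, ⟨h1, h2⟩, rfl⟩
      refine ⟨E z, ⟨?_, fun i => h2 _⟩, rfl⟩
      rw [hA] at h1
      exact G.injective h1
    · rintro ⟨z, ⟨h1, h2⟩, rfl⟩
      refine ⟨E.symm z, ⟨by rw [hAs, h1], fun i => h2 _⟩, ?_⟩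
      simp

/-- sign of a Boolean -/
def sg (β : Bool) : ℝ := if β then -1 else 1

lemma sg_not (β : Bool) : sg (!β) = - sg β := by cases β <;> simp [sg]

section constr
variable {J K : Type*} [Fintype J] [Fintype K] [DecidableEq J] [DecidableEq K]

/-- columns of the constraint matrix -/
def colA : (J × Bool × Bool) ⊕ K → (Option J → ℝ)
  | Sum.inl (j, β, _) => sg β • Pi.single (some j) 1 + Pi.single none (1 / 2)
  | Sum.inr _ => 0

/-- columns of the projection -/
def colW {n : ℕ} (p s h : J → Fin n → ℝ) (r : K → Fin n → ℝ) : (J × Bool × Bool) ⊕ K → (Fin n → ℝ)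
  | Sum.inl (j, β, σ) => (1 / 2 : ℝ) • p j + (sg σ / 2) • (s j + sg β • h j)
  | Sum.inr k => r k

/-- constraint map -/
def conL : ((J × Bool × Bool) ⊕ K → ℝ) →ₗ[ℝ] (Option J → ℝ) := Fintype.linearCombination ℝ colA

/-- projection map -/
def conW {n : ℕ} (p s h : J → Fin n → ℝ) (r : K → Fin n → ℝ) :
    ((J × Bool × Bool) ⊕ K → ℝ) →ₗ[ℝ] (Fin n → ℝ) := Fintype.linearCombination ℝ (colW p s h r)

lemma conL_some (z : (J × Bool × Bool) ⊕ K → ℝ) (j : J) :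
    conL z (some j) = (z (Sum.inl (j, false, false)) + z (Sum.inl (j, false, true)))
      - (z (Sum.inl (j, true, false)) + z (Sum.inl (j, true, true))) := by
  simp only [conL, Fintype.linearCombination_apply, Fintype.sum_sum_type, Fintype.sum_prod_type,
    Fintype.sum_bool, colA, Finset.sum_apply, Pi.add_apply, Pi.smul_apply, smul_eq_mul]
  simp [Pi.single_apply, sg, Finset.sum_add_distrib]
  ring

lemma conL_none (z : (J × Bool × Bool) ⊕ K → ℝ) :
    conL z none = ∑ j, (z (Sum.inl (j, false, false)) + z (Sum.inl (j, false, true))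
      + (z (Sum.inl (j, true, false)) + z (Sum.inl (j, true, true)))) / 2 := by
  simp only [conL, Fintype.linearCombination_apply, Fintype.sum_sum_type, Fintype.sum_prod_type,
    Fintype.sum_bool, colA, Finset.sum_apply, Pi.add_apply, Pi.smul_apply, smul_eq_mul]
  simp
  apply Finset.sum_congr rfl
  intros; ring

lemma conL_single (i : (J × Bool × Bool) ⊕ K) :
    conL (J := J) (K := K) (Pi.single i 1) = colA i := by
  simp [conL, Fintype.linearCombination_apply_single]

lemma conW_single {n : ℕ} (p s h : J → Fin n → ℝ) (r : K → Fin n → ℝ) (i : (J × Bool × Bool) ⊕ K) :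
    conW p s h r (Pi.single i 1) = colW p s h r i := by
  simp [conW, Fintype.linearCombination_apply_single]

lemma conW_val {n : ℕ} (p s h : J → Fin n → ℝ) (r : K → Fin n → ℝ) (φ : (Fin n → ℝ) →ₗ[ℝ] ℝ)
    (z : (J × Bool × Bool) ⊕ K → ℝ) :
    φ (conW p s h r z) = ∑ j, ((z (Sum.inl (j, false, false)) + z (Sum.inl (j, false, true))
      + (z (Sum.inl (j, true, false)) + z (Sum.inl (j, true, true)))) / 2 * φ (p j) +
      (z (Sum.inl (j, false, false)) - z (Sum.inl (j, false, true))) / 2 * (φ (s j) + φ (h j)) +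
      (z (Sum.inl (j, true, false)) - z (Sum.inl (j, true, true))) / 2 * (φ (s j) - φ (h j))) +
      ∑ k, z (Sum.inr k) * φ (r k) := by
  simp only [conW, Fintype.linearCombination_apply, Fintype.sum_sum_type, Fintype.sum_prod_type,
    Fintype.sum_bool, colW, map_add, map_sum, map_smul, smul_eq_mul]
  congr 1
  apply Finset.sum_congr rfl
  intros; simp [sg]; ring

/-- right-hand side -/
def conb : Option J → ℝ := Pi.single none 1

lemma conL_uniform [Nonempty J] (z : (J × Bool × Bool) ⊕ K → ℝ)
    (hz : ∀ j β, z (Sum.inl (j, β, false)) + z (Sum.inl (j, β, true)) = 1 / (Fintype.card J : ℝ)) :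
    conL z = conb := by
  have hc : (Fintype.card J : ℝ) ≠ 0 := by simp
  funext o
  cases o with
  | none =>
    rw [conL_none]
    simp only [hz, conb, Pi.single_eq_same]
    simp
  | some j =>
    rw [conL_some, hz, hz]; simp [conb]

lemma block_bound {x1 y1 x2 y2 P S H D : ℝ} (h1 : 0 ≤ x1) (h2 : 0 ≤ y1) (h3 : 0 ≤ x2) (h4 : 0 ≤ y2)
    (he : x1 + y1 - (x2 + y2) = 0) (hS : |S| ≤ D - P) (hH : |H| ≤ D - P) :
    (x1 + y1 + (x2 + y2)) / 2 * P + (x1 - y1) / 2 * (S + H) + (x2 - y2) / 2 * (S - H) ≤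
      (x1 + y1 + (x2 + y2)) / 2 * D := by
  rw [abs_le] at hS hH
  obtain ⟨hS1, hS2⟩ := hS
  obtain ⟨hH1, hH2⟩ := hH
  have key : ∀ a c t : ℝ, |a| ≤ t → |c| ≤ t → (a + c) / 2 * S + (a - c) / 2 * H ≤ t * (D - P) := by
    intro a c t ha hc
    rw [abs_le] at ha hc
    have b1 : (a + c) / 2 * S ≤ |(a + c) / 2| * (D - P) := by
      rcases abs_cases ((a + c) / 2) with ⟨h, h'⟩ | ⟨h, h'⟩ <;> rw [h] <;> nlinarith
    have b2 : (a - c) / 2 * H ≤ |(a - c) / 2| * (D - P) := by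
      rcases abs_cases ((a - c) / 2) with ⟨h, h'⟩ | ⟨h, h'⟩ <;> rw [h] <;> nlinarith
    have b3 : |(a + c) / 2| + |(a - c) / 2| ≤ t := by
      rcases abs_cases ((a + c) / 2) with ⟨h, h'⟩ | ⟨h, h'⟩ <;>
      rcases abs_cases ((a - c) / 2) with ⟨h2, h2'⟩ | ⟨h2, h2'⟩ <;> rw [h, h2] <;> linarith
    have b4 : 0 ≤ D - P := by linarith
    nlinarith [mul_le_mul_of_nonneg_right b3 b4]
  have := key (x1 - y1) (x2 - y2) (x1 + y1) (by rw [abs_le]; constructor <;> linarith)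
    (by rw [abs_le]; constructor <;> linarith)
  have e : (x1 + y1 + (x2 + y2)) / 2 = x1 + y1 := by linarith
  rw [e]
  linarith

lemma con_circ {n : ℕ} (p s h : J → Fin n → ℝ) (r : K → Fin n → ℝ) {g : Fin n → ℝ} (hg : g ≠ 0)
    (hs : ∀ j, ∃ c : ℝ, s j = c • g)
    (hh : ∀ j, (s j = 0 ∧ h j = 0) ∨ ¬ ∃ c : ℝ, h j = c • g)
    (hsep : ∀ j l, j ≠ l → ∀ a ∈ ({-1, 0, 1} : Set ℝ), ∀ a' ∈ ({-1, 0, 1} : Set ℝ),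
      ¬ ∃ c : ℝ, (p j + a • h j) - (p l + a' • h l) = c • g)
    (hr : ∀ k, ∀ c : ℝ, g ≠ c • r k)
    (z : (J × Bool × Bool) ⊕ K → ℝ) (hz : conL z = 0) (hz0 : z ≠ 0)
    (hmin : ∀ y : (J × Bool × Bool) ⊕ K → ℝ, conL y = 0 → y ≠ 0 → (∀ i, z i = 0 → y i = 0) →
      ∃ c : ℝ, z = c • y) : conW p s h r z ≠ g := by
  intro hzg
  by_cases h1 : ∃ k, z (Sum.inr k) ≠ 0
  · obtain ⟨k, hk⟩ := h1
    obtain ⟨c, hc⟩ := hmin (Pi.single (Sum.inr k) 1) (by rw [conL_single]; rfl) (by simp) (by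
      intro i hi
      apply Pi.single_eq_of_ne
      rintro rfl
      exact hk hi)
    apply hr k c
    rw [← hzg, hc, map_smul, conW_single]; rfl
  push Not at h1
  by_cases h2 : ∃ j β, z (Sum.inl (j, β, false)) ≠ 0 ∧ z (Sum.inl (j, β, true)) ≠ 0
  · obtain ⟨j, β, hf, ht⟩ := h2
    obtain ⟨c, hc⟩ := hmin (Pi.single (Sum.inl (j, β, false)) 1 - Pi.single (Sum.inl (j, β, true)) 1)
      (by rw [map_sub, conL_single, conL_single]; simp [colA])
      (by
        intro h0
        have := congrFun h0 (Sum.inl (j, β, false))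
        simp at this)
      (by
        intro i hi
        have n1 : i ≠ Sum.inl (j, β, false) := by rintro rfl; exact hf hi
        have n2 : i ≠ Sum.inl (j, β, true) := by rintro rfl; exact ht hi
        simp [n1, n2])
    have e : g = c • (s j + sg β • h j) := by
      rw [← hzg, hc, map_smul, map_sub, conW_single, conW_single]
      congr 1
      simp only [colW]
      simp only [sg, if_true, Bool.false_eq_true, if_false]
      module
    have hc0 : c ≠ 0 := by rintro rfl; exact hg (by simpa using e)
    rcases hh j with ⟨e1, e2⟩ | hn
    · apply hg; rw [e, e1, e2]; simp
    · obtain ⟨c', hc'⟩ := hs j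
      apply hn
      have hsg : sg β * sg β = 1 := by cases β <;> simp [sg]
      refine ⟨sg β * (c⁻¹ - c'), ?_⟩
      have e3 : s j + sg β • h j = c⁻¹ • g := by
        rw [e, inv_smul_smul₀ hc0]
      have e4 : sg β • h j = (c⁻¹ - c') • g := by
        rw [sub_smul, ← e3, ← hc']; abel
      rw [mul_smul, ← e4, smul_smul, hsg, one_smul]
  push Not at h2
  have h3 : ∀ j β, ∃ σ, z (Sum.inl (j, β, !σ)) = 0 := by
    intro j β
    by_cases hf : z (Sum.inl (j, β, false)) = 0
    · exact ⟨true, hf⟩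
    · exact ⟨false, h2 j β hf⟩
  choose σ hσ using h3
  have hsum : ∀ j β, z (Sum.inl (j, β, false)) + z (Sum.inl (j, β, true)) =
      z (Sum.inl (j, β, σ j β)) := by
    intro j β
    have := hσ j β
    cases hcase : σ j β <;> rw [hcase] at this <;> simp at this <;> simp [this]
  have heq : ∀ j β, z (Sum.inl (j, β, σ j β)) = z (Sum.inl (j, false, σ j false)) := by
    intro j β
    have := congrFun hz (some j)
    rw [conL_some, hsum, hsum] at this
    cases β
    · rfl
    · simp at this; linarith
  have htot : ∑ j, z (Sum.inl (j, false, σ j false)) = 0 := by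
    have := congrFun hz none
    rw [conL_none] at this
    simp only [hsum, heq _ true] at this
    simpa using this
  have hex : ∃ j, z (Sum.inl (j, false, σ j false)) ≠ 0 := by
    by_contra! hall
    apply hz0
    funext i
    rcases i with ⟨j, β, τ⟩ | k
    · by_cases hτ : τ = σ j β
      · rw [hτ, heq, hall]; rfl
      · have : τ = !(σ j β) := by cases τ <;> cases hh : σ j β <;> simp_all
        rw [this, hσ]; rfl
    · exact h1 k
  obtain ⟨j, hj⟩ := hex
  have hex2 : ∃ l, j ≠ l ∧ z (Sum.inl (l, false, σ l false)) ≠ 0 := by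
    by_contra! hall
    apply hj
    rw [← htot]
    symm
    apply Finset.sum_eq_single j
    · intro l _ hl; exact hall l hl.symm
    · simp
  obtain ⟨l, hjl, hl⟩ := hex2
  obtain ⟨c, hc⟩ := hmin
    ((Pi.single (Sum.inl (j, false, σ j false)) 1 + Pi.single (Sum.inl (j, true, σ j true)) 1)
      - (Pi.single (Sum.inl (l, false, σ l false)) 1 + Pi.single (Sum.inl (l, true, σ l true)) 1))
    (by
      simp only [map_sub, map_add, conL_single, colA, sg, if_true, Bool.false_eq_true, if_false]
      module)
    (by
      intro h0
      have := congrFun h0 (Sum.inl (j, false, σ j false))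
      simp [hjl] at this)
    (by
      intro i hi
      have n1 : ∀ β, i ≠ Sum.inl (j, β, σ j β) := by
        rintro β rfl; rw [heq] at hi; exact hj hi
      have n2 : ∀ β, i ≠ Sum.inl (l, β, σ l β) := by
        rintro β rfl; rw [heq] at hi; exact hl hi
      simp [n1, n2])
  have hmem : ∀ a c : Bool, (sg a - sg c) / 2 ∈ ({-1, 0, 1} : Set ℝ) := by
    intro a c; cases a <;> cases c <;> simp [sg] <;> norm_num
  have corner : ∀ j, conW p s h r (Pi.single (Sum.inl (j, false, σ j false)) 1) +
      conW p s h r (Pi.single (Sum.inl (j, true, σ j true)) 1) =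
      p j + ((sg (σ j false) + sg (σ j true)) / 2) • s j +
        ((sg (σ j false) - sg (σ j true)) / 2) • h j := by
    intro j
    simp only [conW_single, colW]
    rw [show sg false = 1 from rfl, show sg true = -1 from rfl]
    module
  rw [hc, map_smul, map_sub, map_add, map_add, corner, corner] at hzg
  have hc0 : c ≠ 0 := by rintro rfl; exact hg (by simpa using hzg.symm)
  obtain ⟨cj, hcj⟩ := hs j
  obtain ⟨cl, hcl⟩ := hs l
  refine hsep j l hjl _ (hmem (σ j false) (σ j true)) _ (hmem (σ l false) (σ l true))
    ⟨c⁻¹ - ((sg (σ j false) + sg (σ j true)) / 2) * cj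
      + ((sg (σ l false) + sg (σ l true)) / 2) * cl, ?_⟩
  have e5 : c⁻¹ • g = (p j + ((sg (σ j false) + sg (σ j true)) / 2) • s j +
        ((sg (σ j false) - sg (σ j true)) / 2) • h j) -
        (p l + ((sg (σ l false) + sg (σ l true)) / 2) • s l +
        ((sg (σ l false) - sg (σ l true)) / 2) • h l) := by
    rw [← hzg, inv_smul_smul₀ hc0]
  rw [add_smul, sub_smul, e5, hcj, hcl]
  module

lemma kill {n pP qP : ℕ} [Nonempty J]
    (A : Matrix (Fin pP) (Fin n) ℝ) (b : Fin pP → ℝ)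
    (B : Matrix (Fin qP) (Fin n) ℝ) (d : Fin qP → ℝ)
    (p s h : J → Fin n → ℝ) (r : K → Fin n → ℝ) {g : Fin n → ℝ} (hg : g ≠ 0)
    (hs : ∀ j, ∃ c : ℝ, s j = c • g)
    (hh : ∀ j, (s j = 0 ∧ h j = 0) ∨ ¬ ∃ c : ℝ, h j = c • g)
    (hsep : ∀ j l, j ≠ l → ∀ a ∈ ({-1, 0, 1} : Set ℝ), ∀ a' ∈ ({-1, 0, 1} : Set ℝ),
      ¬ ∃ c : ℝ, (p j + a • h j) - (p l + a' • h l) = c • g)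
    (hr : ∀ k, ∀ c : ℝ, g ≠ c • r k)
    (hAp : ∀ j, A.mulVec (p j) = b) (hAs : ∀ j, A.mulVec (s j) = 0) (hAh : ∀ j, A.mulVec (h j) = 0)
    (hAr : ∀ k, A.mulVec (r k) = 0)
    (hBs : ∀ j i, |B.mulVec (s j) i| ≤ d i - B.mulVec (p j) i)
    (hBh : ∀ j i, |B.mulVec (h j) i| ≤ d i - B.mulVec (p j) i)
    (hBr : ∀ k i, B.mulVec (r k) i ≤ 0)
    (hcov : ∀ T : Set (Fin n → ℝ), Convex ℝ T → (∀ j, ∀ θ : ℝ, |θ| ≤ 1 → p j + θ • s j ∈ T) →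
      (∀ k, ∀ x ∈ T, ∀ t : ℝ, 0 ≤ t → x + t • r k ∈ T) → polySet A b B d ⊆ T) :
    ¬ (∀ (m pQ qQ : ℕ)
        (AQ : Matrix (Fin pQ) (Fin m) ℝ) (bQ : Fin pQ → ℝ)
        (BQ : Matrix (Fin qQ) (Fin m) ℝ) (dQ : Fin qQ → ℝ)
        (Q : Set (Fin m → ℝ)) (π : (Fin m → ℝ) →ₗ[ℝ] (Fin n → ℝ)),
        PointedSet Q → Irredundant AQ bQ BQ dQ Q → (fun x => π x) '' Q = polySet A b B d →
        g ∈ (fun x => π x) '' circuits AQ BQ) := by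
  have hN : (0 : ℝ) < 1 / (Fintype.card J : ℝ) := by
    have : (0 : ℝ) < Fintype.card J := by exact_mod_cast Fintype.card_pos
    positivity
  set N : ℝ := 1 / (Fintype.card J : ℝ) with hNdef
  refine std_kill _ g (conL (J := J) (K := K)) conb (conW p s h r) ?_ ?_ ?_
    (con_circ p s h r hg hs hh hsep hr)
  · refine ⟨Sum.elim (fun _ => N / 2) (fun _ => 1), conL_uniform _ ?_, ?_⟩
    · intro j β; rw [← hNdef]; simp
    · rintro (i | k)
      · simpa using by positivity
      · simp
  · rintro (⟨j0, β0, σ0⟩ | k0)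
    · refine ⟨Sum.elim (fun i => if i = (j0, β0, σ0) then 0 else
        if i = (j0, β0, !σ0) then N else N / 2) (fun _ => 1), conL_uniform _ ?_, ?_, ?_⟩
      · intro j β
        rw [← hNdef]
        simp only [Sum.elim_inl, Prod.mk.injEq]
        by_cases e : j = j0 ∧ β = β0
        · obtain ⟨rfl, rfl⟩ := e
          cases σ0 <;> simp
        · have : ∀ τ, ¬ (j = j0 ∧ β = β0 ∧ τ) := fun τ h => e ⟨h.1, h.2.1⟩
          simp [this]
      · simp
      · rintro (i | k) hi
        · have : i ≠ (j0, β0, σ0) := fun h => hi (by rw [h])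
          simp only [Sum.elim_inl, this, if_false]
          split_ifs <;> positivity
        · simp
    · refine ⟨Sum.elim (fun _ => N / 2) (fun k => if k = k0 then 0 else 1), conL_uniform _ ?_, ?_, ?_⟩
      · intro j β; rw [← hNdef]; simp
      · simp
      · rintro (i | k) hi
        · simpa using by positivity
        · have : k ≠ k0 := fun h => hi (by rw [h])
          simp [this]
  · apply Set.Subset.antisymm
    · rintro _ ⟨z, ⟨hz, hzn⟩, rfl⟩
      have hbal : ∀ j, (z (Sum.inl (j, false, false)) + z (Sum.inl (j, false, true)))
          - (z (Sum.inl (j, true, false)) + z (Sum.inl (j, true, true))) = 0 := by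
        intro j; rw [← conL_some, hz]; simp [conb]
      have htot : ∑ j, (z (Sum.inl (j, false, false)) + z (Sum.inl (j, false, true))
          + (z (Sum.inl (j, true, false)) + z (Sum.inl (j, true, true)))) / 2 = 1 := by
        rw [← conL_none, hz]; simp [conb]
      refine ⟨?_, ?_⟩
      · funext i
        have := conW_val p s h r (LinearMap.proj i ∘ₗ A.mulVecLin) z
        simp only [LinearMap.comp_apply, mulVecLin_apply, LinearMap.proj_apply, hAp, hAs, hAh, hAr,
          Pi.zero_apply] at this
        simp only [this]
        simp only [add_zero, sub_zero, mul_zero, Finset.sum_const_zero]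
        rw [← Finset.sum_mul, htot, one_mul]
      · intro i
        have := conW_val p s h r (LinearMap.proj i ∘ₗ B.mulVecLin) z
        simp only [LinearMap.comp_apply, mulVecLin_apply, LinearMap.proj_apply] at this
        simp only [this]
        have k1 := Finset.sum_le_sum (s := Finset.univ) (fun j (_ : j ∈ Finset.univ) =>
          block_bound (hzn (Sum.inl (j, false, false))) (hzn (Sum.inl (j, false, true)))
          (hzn (Sum.inl (j, true, false))) (hzn (Sum.inl (j, true, true))) (hbal j)
          (hBs j i) (hBh j i))
        rw [← Finset.sum_mul, htot, one_mul] at k1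
        have k2 : ∑ k, z (Sum.inr k) * B.mulVec (r k) i ≤ 0 :=
          Finset.sum_nonpos fun k _ => mul_nonpos_of_nonneg_of_nonpos (hzn _) (hBr k i)
        linarith
    · apply hcov
      · rintro _ ⟨x, ⟨hx1, hx2⟩, rfl⟩ _ ⟨y, ⟨hy1, hy2⟩, rfl⟩ a c ha hc hac
        refine ⟨a • x + c • y, ⟨?_, fun i => ?_⟩, by simp⟩
        · rw [map_add, map_smul, map_smul, hx1, hy1, ← add_smul, hac, one_smul]
        · have := hx2 i
          have := hy2 i
          simp only [Pi.add_apply, Pi.smul_apply, smul_eq_mul]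
          positivity
      · intro j θ hθ
        rw [abs_le] at hθ
        have q1 : 0 ≤ (1 + θ) / 2 := by linarith
        have q2 : 0 ≤ (1 - θ) / 2 := by linarith
        have hsn : ∀ i i' : (J × Bool × Bool) ⊕ K, 0 ≤ (Pi.single i 1 : (J × Bool × Bool) ⊕ K → ℝ) i' := by
          intro i i'
          rw [Pi.single_apply]; split_ifs <;> norm_num
        refine ⟨((1 + θ) / 2) • (Pi.single (Sum.inl (j, false, false)) 1) +
          ((1 + θ) / 2) • (Pi.single (Sum.inl (j, true, false)) 1) +
          ((1 - θ) / 2) • (Pi.single (Sum.inl (j, false, true)) 1) +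
          ((1 - θ) / 2) • (Pi.single (Sum.inl (j, true, true)) 1), ⟨?_, fun i => ?_⟩, ?_⟩
        · simp only [map_add, map_smul, conL_single, colA, conb]
          rw [show sg false = 1 from rfl, show sg true = -1 from rfl,
            show (Pi.single none (1 / 2) : Option J → ℝ) = (1 / 2 : ℝ) • Pi.single none 1 by
              rw [← Pi.single_smul]; simp]
          module
        · have a1 := mul_nonneg q1 (hsn (Sum.inl (j, false, false)) i)
          have a2 := mul_nonneg q1 (hsn (Sum.inl (j, true, false)) i)
          have a3 := mul_nonneg q2 (hsn (Sum.inl (j, false, true)) i)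
          have a4 := mul_nonneg q2 (hsn (Sum.inl (j, true, true)) i)
          simp only [Pi.add_apply, Pi.smul_apply, smul_eq_mul]
          linarith
        · simp only [map_add, map_smul, conW_single, colW]
          rw [show sg false = 1 from rfl, show sg true = -1 from rfl]
          module
      · rintro k _ ⟨z, ⟨hz1, hz2⟩, rfl⟩ t ht
        refine ⟨z + t • Pi.single (Sum.inr k) 1, ⟨?_, fun i => ?_⟩, ?_⟩
        · rw [map_add, map_smul, conL_single, hz1]; simp [colA]
        · have := hz2 i
          simp only [Pi.add_apply, Pi.smul_apply, smul_eq_mul, Pi.single_apply]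
          split_ifs <;> simp <;> linarith
        · simp only [map_add, map_smul, conW_single, colW]

end constr

lemma backward_empty_s17 {n : ℕ} (g : Fin n → ℝ) :
    ¬ (∀ (m pQ qQ : ℕ)
        (AQ : Matrix (Fin pQ) (Fin m) ℝ) (bQ : Fin pQ → ℝ)
        (BQ : Matrix (Fin qQ) (Fin m) ℝ) (dQ : Fin qQ → ℝ)
        (Q : Set (Fin m → ℝ)) (π : (Fin m → ℝ) →ₗ[ℝ] (Fin n → ℝ)),
        PointedSet Q → Irredundant AQ bQ BQ dQ Q → (fun x => π x) '' Q = ∅ →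
        g ∈ (fun x => π x) '' circuits AQ BQ) := by
  intro H
  have hz : ∀ x : Fin 0 → ℝ, (0 : Matrix (Fin 1) (Fin 0) ℝ).mulVec x ≠ 1 := by
    intro x hx
    have := congrFun hx 0
    simp at this
  have hirr : Irredundant (0 : Matrix (Fin 1) (Fin 0) ℝ) 1 (0 : Matrix (Fin 0) (Fin 0) ℝ) 0 ∅ := by
    refine ⟨?_, ?_, fun i => i.elim0⟩
    · ext x
      simp only [Set.mem_empty_iff_false, false_iff]
      exact fun h => hz x h.1
    · ext x
      simpa using hz x
  obtain ⟨z, hz', -⟩ := H 0 1 0 0 1 0 0 ∅ 0 (fun x v h => (h 0).elim) hirr (by simp)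
  exact hz'.2.1 (Subsingleton.elim _ _)

lemma backward_s17 {n pP qP : ℕ}
    (A : Matrix (Fin pP) (Fin n) ℝ) (b : Fin pP → ℝ)
    (B : Matrix (Fin qP) (Fin n) ℝ) (d : Fin qP → ℝ)
    (hpt : PointedSet (polySet A b B d)) {g : Fin n → ℝ} (hg : g ≠ 0)
    (hne : (polySet A b B d).Nonempty) (hedge : ¬ IsEdgeDirection (polySet A b B d) g) :
    ¬ (∀ (m pQ qQ : ℕ)
        (AQ : Matrix (Fin pQ) (Fin m) ℝ) (bQ : Fin pQ → ℝ)
        (BQ : Matrix (Fin qQ) (Fin m) ℝ) (dQ : Fin qQ → ℝ)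
        (Q : Set (Fin m → ℝ)) (π : (Fin m → ℝ) →ₗ[ℝ] (Fin n → ℝ)),
        PointedSet Q → Irredundant AQ bQ BQ dQ Q → (fun x => π x) '' Q = polySet A b B d →
        g ∈ (fun x => π x) '' circuits AQ BQ) := by
  classical
  have hpd := pdesc_of_pointed hpt hne
  obtain ⟨r, hr1, hr2⟩ := exists_rays hpd
  obtain ⟨v, hv1, hv2⟩ := exists_verts hne
  let W : Submodule ℝ (Fin n → ℝ) := ℝ ∙ g
  have hW : ∀ x, x ∈ W ↔ ∃ c : ℝ, x = c • g := fun x => by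
    simp only [W, Submodule.mem_span_singleton, eq_comm]
  have hmk : ∀ x y, W.mkQ x = W.mkQ y ↔ ∃ c : ℝ, x - y = c • g := fun x y => by
    rw [← hW, Submodule.mkQ_apply, Submodule.mkQ_apply, Submodule.Quotient.eq]
  let J := Set.range (fun S : Set (Fin qP) => W.mkQ (v S))
  letI : Fintype J := Fintype.ofFinite _
  letI : Fintype (Set (Fin qP)) := Fintype.ofFinite _
  haveI : Nonempty J := ⟨⟨_, ∅, rfl⟩⟩
  have hgg : 0 < g ⬝ᵥ g := by
    have := dotProduct_self_eq_zero (v := g)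
    refine lt_of_le_of_ne ?_ (fun h => hg (this.mp h.symm))
    exact Finset.sum_nonneg fun i _ => mul_self_nonneg _
  have hcls : ∀ j : J, ∃ u w : Fin n → ℝ, u ∈ polySet A b B d ∧ w ∈ polySet A b B d ∧
      W.mkQ u = j ∧ W.mkQ w = j ∧ ∀ S, W.mkQ (v S) = j →
        g ⬝ᵥ w ≤ g ⬝ᵥ v S ∧ g ⬝ᵥ v S ≤ g ⬝ᵥ u := by
    rintro ⟨j, S0, hS0⟩
    have hn : (Finset.univ.filter (fun S => W.mkQ (v S) = j)).Nonempty := 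
      ⟨S0, Finset.mem_filter.mpr ⟨Finset.mem_univ _, hS0⟩⟩
    obtain ⟨S1, h1, h1'⟩ := Finset.exists_max_image _ (fun S => g ⬝ᵥ v S) hn
    obtain ⟨S2, h2, h2'⟩ := Finset.exists_min_image _ (fun S => g ⬝ᵥ v S) hn
    simp only [Finset.mem_filter, Finset.mem_univ, true_and] at h1 h1' h2 h2'
    exact ⟨v S1, v S2, hv1 _, hv1 _, h1, h2, fun S hS => ⟨h2' S hS, h1' S hS⟩⟩
  choose u w hu hw huj hwj hext using hcls
  let p : J → Fin n → ℝ := fun j => (1 / 2 : ℝ) • (u j + w j)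
  let s : J → Fin n → ℝ := fun j => (1 / 2 : ℝ) • (u j - w j)
  have hs : ∀ j, ∃ c : ℝ, s j = c • g := by
    intro j
    obtain ⟨c, hc⟩ := (hmk (u j) (w j)).mp ((huj j).trans (hwj j).symm)
    exact ⟨1 / 2 * c, by simp only [s]; rw [hc, smul_smul]⟩
  have hAp : ∀ j, A.mulVec (p j) = b := by
    intro j
    simp only [p]
    rw [mulVec_smul, mulVec_add, (hu j).1, (hw j).1]; module
  have hBp : ∀ j i, B.mulVec (p j) i = (B.mulVec (u j) i + B.mulVec (w j) i) / 2 := by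
    intro j i
    simp only [p]
    rw [mulVec_smul, mulVec_add]; simp; ring
  have hBs' : ∀ j i, B.mulVec (s j) i = (B.mulVec (u j) i - B.mulVec (w j) i) / 2 := by
    intro j i
    simp only [s]
    rw [mulVec_smul, mulVec_sub]; simp; ring
  have hkex : ∀ j, ∃ k : Fin n → ℝ, ((s j = 0 ∧ k = 0) ∨ ¬ ∃ c : ℝ, k = c • g) ∧ A.mulVec k = 0 ∧
      ∀ i, |B.mulVec k i| ≤ d i - B.mulVec (p j) i := by
    intro j
    by_cases huw : u j = w j
    · refine ⟨0, Or.inl ⟨by simp [s, huw], rfl⟩, by simp, fun i => ?_⟩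
      rw [hBp]
      have := (hu j).2 i
      have := (hw j).2 i
      simp; linarith
    · obtain ⟨k, h1, h2, h3⟩ := pair_lemma hedge (hu j) (hw j) huw
      exact ⟨k, Or.inr h1, h2, h3⟩
  choose k hk1 hk2 hk3 using hkex
  have hpW : ∀ j l, j ≠ l → p j - p l ∉ W := by
    intro j l hjl hmem
    apply hjl
    have e : ∀ j : J, W.mkQ (p j) = j := by
      intro j
      rw [← huj j, hmk]
      obtain ⟨c, hc⟩ := hs j
      refine ⟨-c, ?_⟩
      rw [neg_smul, ← hc]
      simp only [p, s]; module
    apply Subtype.ext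
    rw [← e j, ← e l, hmk, ← hW]
    exact hmem
  have hev : ∀ᶠ ε : ℝ in nhdsWithin 0 (Set.Ioi 0), ∀ j l, j ≠ l →
      ∀ a ∈ ({-1, 0, 1} : Set ℝ), ∀ a' ∈ ({-1, 0, 1} : Set ℝ),
      (p j + a • (ε • k j)) - (p l + a' • (ε • k l)) ∉ W := by
    rw [Filter.eventually_all]; intro j
    rw [Filter.eventually_all]; intro l
    by_cases hjl : j = l
    · simp [hjl]
    rw [Filter.eventually_all]; intro _
    rw [Filter.eventually_all_finite (Set.toFinite _)]; intro a _
    rw [Filter.eventually_all_finite (Set.toFinite _)]; intro a' _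
    have hcl : IsClosed (W : Set (Fin n → ℝ)) := W.closed_of_finiteDimensional
    have hcont : Continuous (fun ε : ℝ => (p j + a • (ε • k j)) - (p l + a' • (ε • k l))) := by
      fun_prop
    have hop := hcl.isOpen_compl.preimage hcont
    have h0 : (0 : ℝ) ∈ (fun ε : ℝ => (p j + a • (ε • k j)) - (p l + a' • (ε • k l))) ⁻¹'
        (W : Set (Fin n → ℝ))ᶜ := by
      simpa using hpW j l hjl
    exact nhdsWithin_le_nhds (hop.mem_nhds h0)
  have hev1 : ∀ᶠ ε : ℝ in nhdsWithin 0 (Set.Ioi 0), ε < 1 :=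
    nhdsWithin_le_nhds (Iio_mem_nhds zero_lt_one)
  obtain ⟨ε, ⟨hsep, hε1⟩, hε0'⟩ := ((hev.and hev1).and self_mem_nhdsWithin).exists
  have hε0 : (0 : ℝ) < ε := hε0'
  refine kill (J := J) (K := Set (Fin qP)) A b B d p s (fun j => ε • k j) r hg hs ?_ ?_ ?_ hAp ?_ ?_
    ?_ ?_ ?_ ?_ ?_
  · intro j
    rcases hk1 j with ⟨h1, h2⟩ | h1
    · exact Or.inl ⟨h1, by simp [h2]⟩
    · refine Or.inr ?_
      rintro ⟨c, hc⟩
      exact h1 ⟨ε⁻¹ * c, by rw [mul_smul, ← hc, inv_smul_smul₀ hε0.ne']⟩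
  · intro j l hjl a ha a' ha'
    rw [← hW]
    exact hsep j l hjl a ha a' ha'
  · intro S c hc
    rcases hr1 S with h0 | ⟨h1, h2⟩
    · rw [h0, smul_zero] at hc; exact hg hc
    · obtain ⟨-, F, hF, hmem⟩ := ray_edge (b := b) (d := d) hpd hne h1 h2
      exact hedge ⟨hg, F, hF, by rw [hc]; exact Submodule.smul_mem _ _ hmem⟩
  · intro j
    simp only [s]
    rw [mulVec_smul, mulVec_sub, (hu j).1, (hw j).1]; simp
  · intro j
    rw [mulVec_smul, hk2, smul_zero]
  · intro S
    rcases hr1 S with h0 | ⟨h1, h2⟩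
    · rw [h0, mulVec_zero]
    · exact h1.1
  · intro j i
    rw [hBp, hBs', abs_le]
    have := (hu j).2 i
    have := (hw j).2 i
    constructor <;> linarith
  · intro j i
    rw [mulVec_smul, Pi.smul_apply, smul_eq_mul, abs_mul, abs_of_pos hε0]
    have := hk3 j i
    nlinarith [abs_nonneg (B.mulVec (k j) i)]
  · intro S i
    rcases hr1 S with h0 | ⟨h1, h2⟩
    · rw [h0, mulVec_zero]; simp
    · exact h2 i
  · intro T hT hpT hrT x hx
    refine minkowski_s17 hpd hr2 hv2 T hT ?_ hrT _ x rfl hx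
    intro S
    let j : J := ⟨W.mkQ (v S), S, rfl⟩
    obtain ⟨h1, h2⟩ := hext j S rfl
    obtain ⟨c1, hc1⟩ := (hmk (v S) (w j)).mp (hwj j).symm
    obtain ⟨c2, hc2⟩ := (hmk (u j) (w j)).mp ((huj j).trans (hwj j).symm)
    have hvS : v S = w j + c1 • g := by rw [← hc1]; abel
    have hu' : u j = w j + c2 • g := by rw [← hc2]; abel
    rw [hvS, dotProduct_add, dotProduct_smul, smul_eq_mul] at h1 h2
    rw [hu', dotProduct_add, dotProduct_smul, smul_eq_mul] at h2
    have hc1' : 0 ≤ c1 := by by_contra! h; nlinarith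
    have hc12 : c1 ≤ c2 := by by_contra! h; nlinarith
    rcases (hc1'.trans hc12).eq_or_lt with h0 | h0
    · have : c1 = 0 := by linarith
      have := hpT j 0 (by simp)
      convert this using 1
      rw [hvS]
      simp only [p, hu', ← h0, ‹c1 = 0›]
      module
    · have := hpT j (2 * (c1 / c2) - 1) (by
        rw [abs_le]
        have a1 : 0 ≤ c1 / c2 := by positivity
        have a2 : c1 / c2 ≤ 1 := by rw [div_le_one h0]; exact hc12
        constructor <;> linarith)
      convert this using 1
      have e : c1 = (c1 / c2) * c2 := by field_simp
      rw [hvS]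
      simp only [p, s, hu']
      generalize c1 / c2 = q at *
      rw [e]
      module

/-- For a pointed polyhedron `P` and a nonzero vector `g`, `g` is an edge
direction of `P` iff `g ∈ π(C(Q))` for every pointed polyhedron `Q` with an irredundant
description and every linear `π` with `π(Q) = P`. -/
theorem stmt_17 {n pP qP : ℕ}
    (AP : Matrix (Fin pP) (Fin n) ℝ) (bP : Fin pP → ℝ)
    (BP : Matrix (Fin qP) (Fin n) ℝ) (dP : Fin qP → ℝ)
    (P : Set (Fin n → ℝ)) (hP : P = polySet AP bP BP dP)
    (hPpt : PointedSet P)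
    (g : Fin n → ℝ) (hg : g ≠ 0) :
    IsEdgeDirection P g ↔
      (∀ (m pQ qQ : ℕ)
        (AQ : Matrix (Fin pQ) (Fin m) ℝ) (bQ : Fin pQ → ℝ)
        (BQ : Matrix (Fin qQ) (Fin m) ℝ) (dQ : Fin qQ → ℝ)
        (Q : Set (Fin m → ℝ)) (π : (Fin m → ℝ) →ₗ[ℝ] (Fin n → ℝ)),
        PointedSet Q → Irredundant AQ bQ BQ dQ Q → (fun x => π x) '' Q = P →
        g ∈ (fun x => π x) '' circuits AQ BQ) := by
  subst hP
  constructor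
  · intro hedge m pQ qQ AQ bQ BQ dQ Q π hQ hirr him
    have hQ' := hirr.1
    subst hQ'
    exact forward hedge π hQ him
  · intro H
    by_contra hne
    by_cases hP : (polySet AP bP BP dP).Nonempty
    · exact backward_s17 AP bP BP dP hPpt hg hP hne H
    · rw [Set.not_nonempty_iff_eq_empty] at hP
      rw [hP] at H
      exact backward_empty_s17 g H
end
end
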